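/- Let Ω ⊂ ℝⁿ be a bounded Lipschitz domain, let F: ℝ^{N×n} → [0,∞) be convex with ν|z| − L ≤ F(z) ≤ L(1+|z|) for all z ∈ ℝ^{N×n} (constants 0 < ν ≤ L < ∞), and let T₀ ∈ L^∞(Ω;ℝ^{N×n}) satisfy ess inf_{x∈Ω} min_{|ξ|=1} (F^∞(ξ) − T₀(x)·ξ) > 0. Then the functional 𝓕[w] = ∫_Ω (F(∇w) − T₀·∇w) dx is coercive: there exist δ > 0 and C > 0 such that 𝓕[w] ≥ δ ∫_Ω |∇w| dx − C for all w ∈ W^{1,1}(Ω;ℝ^N) with (w)_Ω = 0; in particular, if (w_k) is a sequence in W^{1,1}(Ω;ℝ^N) with (w_k)_Ω = 0 for all k and ‖w_k‖_{W^{1,1}(Ω;ℝ^N)} → ∞, then 𝓕[w_k] → ∞ as k → ∞. -/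

import Mathlib

open MeasureTheory Filter Topology Set
open scoped ENNReal RealInnerProductSpace

noncomputable section

/-- Euclidean space `ℝⁿ`. -/
abbrev EVec (n : ℕ) := EuclideanSpace ℝ (Fin n)

/-- Frobenius inner product of two "matrices". -/
def mdot {ι κ : Type*} [Fintype ι] [Fintype κ] (A B : ι → κ → ℝ) : ℝ :=
  ∑ a, ∑ i, A a i * B a i

/-- Frobenius norm. -/
noncomputable def mnorm {ι κ : Type*} [Fintype ι] [Fintype κ] (A : ι → κ → ℝ) : ℝ :=
  Real.sqrt (mdot A A)

/-- Euclidean norm of a vector given as a tuple. -/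
noncomputable def vnorm {ι : Type*} [Fintype ι] (v : ι → ℝ) : ℝ :=
  Real.sqrt (∑ a, v a ^ 2)

/-- `Ω ⊆ ℝⁿ` is a (nonempty, open, connected) Lipschitz domain: every boundary point has
a neighbourhood on which `Ω` can be flattened to a half space by a bi-Lipschitz map. -/
def IsLipschitzDomain {n : ℕ} (Ω : Set (EVec n)) : Prop :=
  IsOpen Ω ∧ Ω.Nonempty ∧ IsConnected Ω ∧
  ∀ x ∈ frontier Ω, ∃ (U : Set (EVec n)) (h hinv : EVec n → EVec n) (K : NNReal)
      (e : EVec n),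
    ‖e‖ = 1 ∧ IsOpen U ∧ x ∈ U ∧ LipschitzOnWith K h U ∧
    LipschitzOnWith K hinv (h '' U) ∧ (∀ y ∈ U, hinv (h y) = y) ∧
    h '' (U ∩ Ω) = (h '' U) ∩ {y : EVec n | 0 < ⟪e, y⟫}

/-- `Du` is the weak (distributional) gradient of `u` on `Ω`, and both are integrable;
i.e. `u ∈ W^{1,1}(Ω; ℝ^ι)` with weak gradient `Du`. -/
def HasWeakDerivOn {n : ℕ} {ι : Type*} [Fintype ι] (Ω : Set (EVec n))
    (u : EVec n → ι → ℝ) (Du : EVec n → ι → Fin n → ℝ) : Prop :=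
  IntegrableOn u Ω volume ∧ IntegrableOn Du Ω volume ∧
  ∀ φ : EVec n → ℝ, ContDiff ℝ 1 φ → HasCompactSupport φ → tsupport φ ⊆ Ω →
    ∀ (a : ι) (i : Fin n),
      ∫ x in Ω, u x a * fderiv ℝ φ x (EuclideanSpace.single i 1) =
        - ∫ x in Ω, Du x a i * φ x

/-- `u ∈ W^{1,2}(Ω;ℝ^ι)` with weak gradient `Du`. -/
def MemW12 {n : ℕ} {ι : Type*} [Fintype ι] (Ω : Set (EVec n))
    (u : EVec n → ι → ℝ) (Du : EVec n → ι → Fin n → ℝ) : Prop :=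
  HasWeakDerivOn Ω u Du ∧ IntegrableOn (fun x => vnorm (u x) ^ 2) Ω volume ∧
    IntegrableOn (fun x => mnorm (Du x) ^ 2) Ω volume

/-- vanishing mean value `(u)_Ω = 0`. -/
def ZeroMean {n : ℕ} {ι : Type*} [Fintype ι] (Ω : Set (EVec n))
    (u : EVec n → ι → ℝ) : Prop :=
  ∀ a : ι, ∫ x in Ω, u x a = 0

/-- The `L^∞(Ω)` norm of a matrix field (w.r.t. the pointwise Frobenius norm). -/
noncomputable def linfNormOn {n N : ℕ} (Ω : Set (EVec n))
    (T : EVec n → Fin N → Fin n → ℝ) : ℝ≥0∞ :=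
  essSup (fun x => ENNReal.ofReal (mnorm (T x))) (volume.restrict Ω)

/-- `T ∈ W^{1,∞}(Ω)`: bounded and Lipschitz on `Ω`. -/
def MemW1inf {n N : ℕ} (Ω : Set (EVec n)) (T : EVec n → Fin N → Fin n → ℝ) : Prop :=
  ∃ C : NNReal, (∀ x ∈ Ω, ‖T x‖ ≤ C) ∧ LipschitzOnWith C T Ω

/-- `T ∈ W^{2,∞}(Ω)`: `T` is bounded with bounded Lipschitz derivative on `Ω`. -/
def MemW2inf {n N : ℕ} (Ω : Set (EVec n)) (T : EVec n → Fin N → Fin n → ℝ) : Prop :=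
  ∃ (C : NNReal) (DT : EVec n → EVec n →L[ℝ] (Fin N → Fin n → ℝ)),
    (∀ x ∈ Ω, ‖T x‖ ≤ C) ∧ (∀ x ∈ Ω, HasFDerivWithinAt T (DT x) Ω x) ∧
    (∀ x ∈ Ω, ‖DT x‖ ≤ C) ∧ LipschitzOnWith C DT Ω

/-- The nonlinear map `A(z) = f'(|z|) z / |z|` (equal to `0` at `z = 0`). -/
noncomputable def Amap {N n : ℕ} (f' : ℝ → ℝ) (z : Fin N → Fin n → ℝ) :
    Fin N → Fin n → ℝ :=
  fun a i => (f' (mnorm z) / mnorm z) * z a i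

/-- `u` is a weak solution of the Neumann problem for the integrand `f(|·|)` and datum `T₀`. -/
def IsWeakSolution {n N : ℕ} (Ω : Set (EVec n)) (f' : ℝ → ℝ)
    (T₀ : EVec n → Fin N → Fin n → ℝ)
    (u : EVec n → Fin N → ℝ) (Du : EVec n → Fin N → Fin n → ℝ) : Prop :=
  HasWeakDerivOn Ω u Du ∧
  ∀ φ Dφ, HasWeakDerivOn Ω φ Dφ →
    ∫ x in Ω, mdot (Amap f' (Du x)) (Dφ x) = ∫ x in Ω, mdot (T₀ x) (Dφ x)

/-- The functional `𝔉[w] = ∫_Ω (f(|∇w|) − T₀ · ∇w) dx` (as a function of the gradient). -/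
noncomputable def FF {n N : ℕ} (Ω : Set (EVec n)) (f : ℝ → ℝ)
    (T₀ : EVec n → Fin N → Fin n → ℝ) (Du : EVec n → Fin N → Fin n → ℝ) : ℝ :=
  ∫ x in Ω, (f (mnorm (Du x)) - mdot (T₀ x) (Du x))

/-- The regularised functional `𝔉_k[w] = 𝔉[w] + (2k)⁻¹ ∫_Ω |∇w|² dx`. -/
noncomputable def FFk {n N : ℕ} (Ω : Set (EVec n)) (f : ℝ → ℝ)
    (T₀ : EVec n → Fin N → Fin n → ℝ) (k : ℕ)
    (Du : EVec n → Fin N → Fin n → ℝ) : ℝ :=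
  FF Ω f T₀ Du + (2 * (k : ℝ))⁻¹ * ∫ x in Ω, mnorm (Du x) ^ 2

end

/-- The functional `𝓕[w] = ∫_Ω (F(∇w) − T₀·∇w) dx` for a general integrand `F`. -/
noncomputable def FFgen {n N : ℕ} (Ω : Set (EVec n)) (F : (Fin N → Fin n → ℝ) → ℝ)
    (T₀ : EVec n → Fin N → Fin n → ℝ) (Du : EVec n → Fin N → Fin n → ℝ) : ℝ :=
  ∫ x in Ω, (F (Du x) - mdot (T₀ x) (Du x))

lemma lip_vol {n : ℕ} {K : NNReal} {f : EVec n → EVec n} {s : Set (EVec n)}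
    (hf : LipschitzOnWith K f s) : volume (f '' s) ≤ (K : ℝ≥0∞) ^ n * volume s := by
  have hinst : (Measure.hausdorffMeasure (n : ℝ) : Measure (EVec n)).IsAddHaarMeasure := by
    simpa using MeasureTheory.isAddHaarMeasure_hausdorffMeasure (E := EuclideanSpace ℝ (Fin n))
  have h := Measure.isAddLeftInvariant_eq_smul (volume : Measure (EVec n))
    (Measure.hausdorffMeasure (n : ℝ))
  have h1 := hf.hausdorffMeasure_image_le (d := (n : ℝ)) (by positivity)
  rw [h]
  simp only [Measure.smul_apply]
  rw [ENNReal.smul_def, ENNReal.smul_def, smul_eq_mul, smul_eq_mul, mul_left_comm]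
  gcongr
  simpa using h1

lemma det_poly {n : ℕ} (A : EVec n →L[ℝ] EVec n) :
    ∃ p : Polynomial ℝ, p.degree < ((n + 1 : ℕ) : WithBot ℕ) ∧
      ∀ t : ℝ, p.eval t = (ContinuousLinearMap.id ℝ (EVec n) + t • A).det := by
  classical
  let b := (EuclideanSpace.basisFun (Fin n) ℝ).toBasis
  let M := LinearMap.toMatrix b b (A : EVec n →ₗ[ℝ] EVec n)
  refine ⟨Matrix.det ((Polynomial.X : Polynomial ℝ) • M.map Polynomial.C + (1 : Matrix (Fin n) (Fin n) ℝ).map Polynomial.C), ?_, ?_⟩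
  · have := Polynomial.natDegree_det_X_add_C_le M 1
    refine lt_of_le_of_lt Polynomial.degree_le_natDegree ?_
    simp only [Fintype.card_fin] at this
    exact_mod_cast Nat.lt_succ_of_le this
  · intro t
    rw [ContinuousLinearMap.det, ← LinearMap.det_toMatrix b]
    rw [← Polynomial.coe_evalRingHom, RingHom.map_det]
    congr 1
    ext i j
    by_cases hij : i = j <;>
    simp [M, hij, LinearMap.toMatrix_apply, b] <;> ring
    
lemma interp {n : ℕ} (ε : ℝ) (hε : 0 < ε) : ∃ (v c : ℕ → ℝ),
    (∀ i, 0 < v i ∧ v i ≤ ε) ∧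
    (∀ p : Polynomial ℝ, p.degree < ((n + 1 : ℕ) : WithBot ℕ) →
      p.eval 1 = ∑ i ∈ Finset.range (n + 1), c i * p.eval (v i)) := by
  let v : ℕ → ℝ := fun i => ε / (i + 1)
  refine ⟨v, fun i => (Lagrange.basis (Finset.range (n + 1)) v i).eval 1, ?_, ?_⟩
  · intro i
    refine ⟨by positivity, ?_⟩
    apply div_le_self hε.le
    linarith [(Nat.cast_nonneg i : (0:ℝ) ≤ i)]
  · intro p hp
    have hinj : Set.InjOn v (Finset.range (n + 1) : Finset ℕ) := by
      intro i _ j _ hij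
      simp only [v] at hij
      field_simp at hij
      have : (i : ℝ) = j := by linarith
      exact_mod_cast this
    have h := Lagrange.eq_interpolate (s := Finset.range (n + 1)) (v := v) (f := p) hinj (by simpa using hp)
    conv_lhs => rw [h]
    rw [Lagrange.interpolate_apply, Polynomial.eval_finsetSum]
    refine Finset.sum_congr rfl fun i _ => ?_
    simp [mul_comm]

lemma small_bij {n : ℕ} {u : EVec n → EVec n} {k : NNReal} (hk : k < 1)
    (hu : LipschitzWith k u) : Function.Bijective (fun x => x + u x) := by
  constructor
  · intro x y hxy
    simp only at hxy
    have h1 := hu.dist_le_mul x y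
    have h2 : dist x y = dist (u x) (u y) := by
      rw [dist_eq_norm, dist_eq_norm, ← norm_neg]
      congr 1
      have : x - y = u y - u x := by
        rw [sub_eq_sub_iff_add_eq_add, hxy, add_comm]
      rw [this]; abel
    have hk' : (k : ℝ) < 1 := by exact_mod_cast hk
    by_contra hne
    have := dist_pos.2 hne
    nlinarith
  · intro y
    have hc : ContractingWith k (fun x => y - u x) := by
      refine ⟨hk, ?_⟩
      refine LipschitzWith.of_dist_le_mul fun a b => ?_
      rw [dist_sub_left]; exact hu.dist_le_mul a b
    refine ⟨hc.fixedPoint, ?_⟩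
    have := hc.fixedPoint_isFixedPt
    have h2 : y - u (hc.fixedPoint) = hc.fixedPoint := this
    simp only
    rw [← sub_eq_iff_eq_add.1 h2]

lemma degree_small {n : ℕ} {u : EVec n → EVec n} {K : NNReal} {R : ℝ}
    (hu : LipschitzWith K u) (hR : ∀ x, R ≤ ‖x‖ → u x = 0) : ∃ ε : ℝ, 0 < ε ∧ ∀ t, 0 < t → t ≤ ε →
    ∫ x in Metric.ball (0 : EVec n) R, (ContinuousLinearMap.id ℝ (EVec n) + t • fderiv ℝ u x).det
      = volume.real (Metric.ball (0 : EVec n) R) := by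
  have hcont : ContinuousAt (fun A : EVec n →L[ℝ] EVec n => A.det) (ContinuousLinearMap.id ℝ (EVec n)) :=
    ContinuousLinearMap.continuous_det.continuousAt
  have hpos : ∀ᶠ A in 𝓝 (ContinuousLinearMap.id ℝ (EVec n)), 0 < A.det := by
    apply hcont.eventually_const_lt
    simp [ContinuousLinearMap.det]
  obtain ⟨η, hη, hball⟩ := Metric.eventually_nhds_iff.1 hpos
  refine ⟨min η 1 / (2 * (K + 1)), by positivity, fun t ht htε => ?_⟩
  have htK : t * (K + 1) ≤ min η 1 / 2 := by
    rw [le_div_iff₀ (by positivity)] at htε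
    linarith
  have htK1 : t * K < 1 := by
    have := min_le_right η 1
    nlinarith
  have htKη : t * K < η := by
    have := min_le_left η 1
    nlinarith
  set g : EVec n → EVec n := fun x => x + t • u x with hg
  obtain ⟨k, hk⟩ : ∃ k : NNReal, (k : ℝ) = t * K := ⟨⟨t * K, by positivity⟩, rfl⟩
  have hlt : LipschitzWith k (fun x => t • u x) := by
    refine LipschitzWith.of_dist_le_mul fun a b => ?_
    rw [dist_smul₀, Real.norm_of_nonneg ht.le]
    have := hu.dist_le_mul a b
    rw [hk, mul_assoc]
    gcongr
  have hbij : Function.Bijective g := small_bij (k := k) (by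
    rw [← NNReal.coe_lt_coe]; rw [hk]; simpa using htK1) hlt
  have hglip : LipschitzWith (1 + k) g := LipschitzWith.id.add hlt
  set B := Metric.ball (0 : EVec n) R
  have hgid : ∀ x, x ∉ B → g x = x := by
    intro x hx
    have : R ≤ ‖x‖ := by simpa [B] using hx
    simp [hg, hR x this]
  have himg : g '' B = B := by
    apply Subset.antisymm
    · rintro _ ⟨x, hx, rfl⟩
      by_contra hgx
      have := hbij.1 (hgid _ hgx)
      rw [this] at hgx; exact hgx hx
    · intro y hy
      obtain ⟨x, rfl⟩ := hbij.2 y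
      by_cases hx : x ∈ B
      · exact ⟨x, hx, rfl⟩
      · rw [hgid x hx] at hy; exact absurd hy hx
  have hmeasD : MeasurableSet {x | DifferentiableAt ℝ u x} := measurableSet_of_differentiableAt ℝ u
  have hae : ∀ᵐ x ∂(volume : Measure (EVec n)), DifferentiableAt ℝ u x := hu.ae_differentiableAt
  set S := B ∩ {x | DifferentiableAt ℝ u x}
  have hS : MeasurableSet S := Metric.isOpen_ball.measurableSet.inter hmeasD
  have hnull : volume (B \ S) = 0 := by
    refine measure_mono_null ?_ hae
    rintro x ⟨hx, hx2⟩
    intro h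
    exact hx2 ⟨hx, h⟩
  have hSB : S =ᵐ[volume] B := by
    rw [ae_eq_set]
    exact ⟨by rw [sdiff_eq_empty.2 inter_subset_left]; simp, hnull⟩
  have hgSB : g '' S =ᵐ[volume] B := by
    rw [ae_eq_set]
    constructor
    · rw [sdiff_eq_empty.2 ((image_mono inter_subset_left).trans himg.le)]; simp
    · refine measure_mono_null (t := g '' (B \ S)) ?_ ?_
      · rintro y ⟨hy, hy2⟩
        rw [← himg] at hy
        obtain ⟨x, hx, rfl⟩ := hy
        exact ⟨x, ⟨hx, fun h => hy2 ⟨x, h, rfl⟩⟩, rfl⟩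
      · have := lip_vol (hglip.lipschitzOnWith (s := B \ S))
        rw [hnull, mul_zero] at this
        exact le_antisymm this zero_le
  have hder : ∀ x ∈ S, HasFDerivWithinAt g (ContinuousLinearMap.id ℝ (EVec n) + t • fderiv ℝ u x) S x := by
    intro x hx
    have : DifferentiableAt ℝ u x := hx.2
    exact ((hasFDerivAt_id x).add (this.hasFDerivAt.const_smul t)).hasFDerivWithinAt
  have key := integral_image_eq_integral_abs_det_fderiv_smul volume hS hder hbij.1.injOn (fun _ => (1:ℝ))
  rw [setIntegral_congr_set hgSB] at key
  simp only [smul_eq_mul, mul_one, setIntegral_const] at key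
  rw [← setIntegral_congr_set hSB]
  rw [key]
  refine setIntegral_congr_fun hS fun x hx => ?_
  rw [abs_of_pos]
  apply hball
  rw [dist_eq_norm, add_sub_cancel_left, norm_smul, Real.norm_of_nonneg ht.le]
  have := norm_fderiv_le_of_lipschitz ℝ hu (x₀ := x)
  calc t * _ ≤ t * K := by gcongr
    _ < η := htKη

lemma degree_one {n : ℕ} {u : EVec n → EVec n} {K : NNReal} {R : ℝ}
    (hu : LipschitzWith K u) (hR : ∀ x, R ≤ ‖x‖ → u x = 0) :
    ∫ x in Metric.ball (0 : EVec n) R, (ContinuousLinearMap.id ℝ (EVec n) + fderiv ℝ u x).det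
      = volume.real (Metric.ball (0 : EVec n) R) := by
  obtain ⟨ε, hε, h⟩ := degree_small hu hR
  obtain ⟨v, c, hv, hc⟩ := interp (n := n) ε hε
  have hpt : ∀ A : EVec n →L[ℝ] EVec n, (ContinuousLinearMap.id ℝ (EVec n) + A).det =
      ∑ i ∈ Finset.range (n + 1), c i * (ContinuousLinearMap.id ℝ (EVec n) + v i • A).det := by
    intro A
    obtain ⟨p, hp, hpe⟩ := det_poly A
    have := hc p hp
    simpa [hpe] using this
  have hsum : ∑ i ∈ Finset.range (n + 1), c i = 1 := by
    have := hc 1 (by rw [Polynomial.degree_one]; exact_mod_cast Nat.succ_pos n)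
    simpa using this.symm
  rw [setIntegral_congr_fun Metric.isOpen_ball.measurableSet fun x _ => hpt (fderiv ℝ u x)]
  have hint : ∀ t : ℝ, IntegrableOn (fun x => (ContinuousLinearMap.id ℝ (EVec n) + t • fderiv ℝ u x).det) (Metric.ball (0 : EVec n) R) volume := by
    intro t
    have hprop : ProperSpace (EVec n →L[ℝ] EVec n) := FiniteDimensional.proper ℝ _
    have hc : Continuous (fun A : EVec n →L[ℝ] EVec n => (ContinuousLinearMap.id ℝ (EVec n) + t • A).det) :=
      ContinuousLinearMap.continuous_det.comp (by fun_prop)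
    obtain ⟨M, hM⟩ := (isCompact_closedBall (0 : EVec n →L[ℝ] EVec n) K).exists_bound_of_continuousOn hc.continuousOn
    refine Measure.integrableOn_of_bounded (M := M) measure_ball_lt_top.ne ?_ ?_
    · exact (hc.measurable.comp (measurable_fderiv ℝ u)).aestronglyMeasurable
    · refine ae_of_all _ fun x => hM _ ?_
      simpa using norm_fderiv_le_of_lipschitz ℝ hu (x₀ := x)
  rw [integral_finsetSum _ fun i _ => (hint (v i)).const_mul (c i)]
  simp_rw [integral_const_mul]
  rw [Finset.sum_congr rfl fun i _ => by rw [h (v i) (hv i).1 (hv i).2], ← Finset.sum_mul, hsum, one_mul]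

noncomputable def rp {n : ℕ} (x : EVec n) : EVec n := (max 1 ‖x‖)⁻¹ • x

lemma rp_lip {n : ℕ} : LipschitzWith 2 (rp (n := n)) := by
  refine LipschitzWith.of_dist_le_mul fun x y => ?_
  rw [dist_eq_norm, dist_eq_norm]
  set a := max 1 ‖x‖ with ha
  set b := max 1 ‖y‖ with hb
  have ha1 : 1 ≤ a := le_max_left _ _
  have hb1 : 1 ≤ b := le_max_left _ _
  have hyb : ‖y‖ ≤ b := le_max_right _ _
  have hab : |b - a| ≤ ‖x - y‖ := by
    have h1 : |b - a| ≤ |‖y‖ - ‖x‖| := by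
      have := abs_max_sub_max_le_abs ‖y‖ ‖x‖ 1
      rwa [max_comm _ (1:ℝ), max_comm _ (1:ℝ)] at this
    refine h1.trans ?_
    rw [norm_sub_rev]
    exact abs_norm_sub_norm_le y x
  have e : rp x - rp y = a⁻¹ • (x - y) + ((b - a) * a⁻¹ * b⁻¹) • y := by
    simp only [rp, ← ha, ← hb]
    rw [smul_sub, sub_add, sub_right_inj, ← sub_smul]
    congr 1
    field_simp
    ring
  rw [e]
  have hainv : a⁻¹ ≤ 1 := inv_le_one_of_one_le₀ ha1
  have ha0 : 0 ≤ a⁻¹ := by positivity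
  have h2 : b⁻¹ * ‖y‖ ≤ 1 := by
    rw [inv_mul_le_iff₀ (by linarith)]; linarith
  calc _ ≤ ‖a⁻¹ • (x - y)‖ + ‖((b - a) * a⁻¹ * b⁻¹) • y‖ := norm_add_le _ _
    _ = a⁻¹ * ‖x - y‖ + |b - a| * a⁻¹ * (b⁻¹ * ‖y‖) := by
        rw [norm_smul, norm_smul, norm_mul, norm_mul, Real.norm_of_nonneg ha0, 
          Real.norm_of_nonneg (by positivity : 0 ≤ b⁻¹), Real.norm_eq_abs]; ring
    _ ≤ 1 * ‖x - y‖ + ‖x - y‖ * 1 * 1 := by gcongr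
    _ = _ := by push_cast; ring

lemma rp_small {n : ℕ} {x : EVec n} (hx : ‖x‖ ≤ 1) : rp x = x := by
  simp [rp, max_eq_left hx]

lemma rp_large {n : ℕ} {x : EVec n} (hx : 1 ≤ ‖x‖) : rp x = ‖x‖⁻¹ • x := by
  simp [rp, max_eq_right hx]

lemma rp_norm {n : ℕ} (x : EVec n) : ‖rp x‖ ≤ 1 := by
  rw [rp, norm_smul, norm_inv, Real.norm_of_nonneg (by positivity), inv_mul_le_iff₀ (by positivity)]
  simp

noncomputable def NN {n : ℕ} (ρ R : ℝ) (y : EVec n) : EVec n := y - R • rp (R⁻¹ • y) + R • rp (ρ⁻¹ • y)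

lemma NN_lip {n : ℕ} (ρ R : ℝ) : ∃ K, LipschitzWith K (NN (n := n) ρ R) := by
  refine ⟨_, (LipschitzWith.id.sub ((lipschitzWith_smul R).comp (rp_lip.comp (lipschitzWith_smul R⁻¹)))).add
    ((lipschitzWith_smul R).comp (rp_lip.comp (lipschitzWith_smul ρ⁻¹)))⟩

lemma rp_scale {n : ℕ} {ρ : ℝ} (hρ : 0 < ρ) {y : EVec n} (hy : ρ ≤ ‖y‖) :
    rp (ρ⁻¹ • y) = ‖y‖⁻¹ • y := by
  have : ‖ρ⁻¹ • y‖ = ρ⁻¹ * ‖y‖ := by rw [norm_smul, Real.norm_of_nonneg (by positivity)]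
  rw [rp_large, this, smul_smul]
  · congr 1; field_simp
  · rw [this, ← div_eq_inv_mul, le_div_iff₀ hρ]; linarith

lemma NN_large {n : ℕ} {ρ R : ℝ} (hρ : 0 < ρ) (hR : ρ ≤ R) {y : EVec n} (hy : R ≤ ‖y‖) :
    NN ρ R y = y := by
  rw [NN, rp_scale hρ (hR.trans hy), rp_scale (hρ.trans_le hR) hy]; simp

lemma NN_mid {n : ℕ} {ρ R : ℝ} (hρ : 0 < ρ) (hR : ρ ≤ R) {y : EVec n} (hy : ‖y‖ ≤ R) (hy2 : ρ ≤ ‖y‖) :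
    NN ρ R y = (R * ‖y‖⁻¹) • y := by
  have hR0 := hρ.trans_le hR
  rw [NN, rp_scale hρ hy2, rp_small, smul_smul, smul_smul, mul_inv_cancel₀ hR0.ne', one_smul]
  · simp
  · rw [norm_smul, norm_inv, Real.norm_of_nonneg hR0.le, inv_mul_le_iff₀ hR0]; linarith

lemma NN_mid_norm {n : ℕ} {ρ R : ℝ} (hρ : 0 < ρ) (hR : ρ ≤ R) {y : EVec n} (hy : ‖y‖ ≤ R) (hy2 : ρ ≤ ‖y‖) :
    ‖NN ρ R y‖ = R := by
  have hR0 := hρ.trans_le hR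
  have hy0 := hρ.trans_le hy2
  rw [NN_mid hρ hR hy hy2, norm_smul, Real.norm_of_nonneg (by positivity)]
  field_simp

lemma NN_mid_dist {n : ℕ} {ρ R : ℝ} (hρ : 0 < ρ) (hR : ρ ≤ R) {y : EVec n} (hy : ‖y‖ ≤ R) (hy2 : ρ ≤ ‖y‖) :
    ‖NN ρ R y - y‖ ≤ R := by
  have hR0 := hρ.trans_le hR
  have hy0 := hρ.trans_le hy2
  rw [NN_mid hρ hR hy hy2]
  have : (R * ‖y‖⁻¹) • y - y = (R * ‖y‖⁻¹ - 1) • y := by rw [sub_smul, one_smul]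
  rw [this, norm_smul, Real.norm_of_nonneg]
  · rw [sub_mul, mul_assoc, inv_mul_cancel₀ hy0.ne']; linarith
  · rw [sub_nonneg, ← div_eq_mul_inv, le_div_iff₀ hy0]; linarith

lemma smul_lip {n : ℕ} {a : EVec n → ℝ} {b : EVec n → EVec n} {Ka Kb M : NNReal}
    (ha : LipschitzWith Ka a) (hb : LipschitzWith Kb b) (ha1 : ∀ x, |a x| ≤ 1)
    (hb1 : ∀ x, ‖b x‖ ≤ M) : LipschitzWith (Kb + Ka * M) (fun x => a x • b x) := by
  refine LipschitzWith.of_dist_le_mul fun x y => ?_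
  have h1 := ha.dist_le_mul x y
  have h2 := hb.dist_le_mul x y
  rw [dist_eq_norm] at *
  have e : a x • b x - a y • b y = a x • (b x - b y) + (a x - a y) • b y := by
    rw [smul_sub, sub_smul]; abel
  rw [e]
  calc _ ≤ ‖a x • (b x - b y)‖ + ‖(a x - a y) • b y‖ := norm_add_le _ _
    _ = |a x| * ‖b x - b y‖ + ‖a x - a y‖ * ‖b y‖ := by simp [norm_smul]
    _ ≤ 1 * (Kb * dist x y) + (Ka * dist x y) * M := by
      gcongr
      · exact ha1 x
      · exact hb1 y
    _ = _ := by push_cast; rw [dist_eq_norm]; ring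

lemma zero_exists {n : ℕ} {H : EVec n → EVec n} {K : NNReal} (hH : LipschitzWith K H)
    (hx : ∀ x, ‖x‖ ≤ 1 → ‖H x - x‖ ≤ 1 / 2) : ∃ x, ‖x‖ ≤ 1 ∧ H x = 0 := by
  by_contra! hcon
  obtain ⟨ρ, hρ, hρH⟩ : ∃ ρ > 0, ∀ x, ‖x‖ ≤ 1 → ρ ≤ ‖H x‖ := by
    obtain ⟨x0, h0, hmin⟩ := (isCompact_closedBall (0 : EVec n) 1).exists_isMinOn ⟨0, by simp⟩
      (hH.continuous.norm.continuousOn)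
    refine ⟨‖H x0‖, norm_pos_iff.2 (hcon x0 (by simpa using h0)), fun x hx => hmin (by simpa using hx)⟩
  set b : EVec n → EVec n := fun x => H (rp x) - rp x with hb
  have hblip : LipschitzWith (K * 2 + 2) b := (hH.comp rp_lip).sub rp_lip
  have hb2 : ∀ x, ‖b x‖ ≤ 1 / 2 := fun x => hx _ (rp_norm x)
  set a : EVec n → ℝ := fun x => max 0 (min 1 (2 - ‖x‖)) with ha
  have halip : LipschitzWith 1 a := by
    have h0 : LipschitzWith 1 (fun x : EVec n => 2 - ‖x‖) := by
      simpa using (LipschitzWith.const (2:ℝ)).sub (lipschitzWith_one_norm (E := EVec n))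
    exact (h0.const_min 1).const_max 0
  have ha0 : ∀ x, 0 ≤ a x := fun x => le_max_left _ _
  have ha1 : ∀ x, a x ≤ 1 := fun x => max_le zero_le_one (min_le_left _ _)
  have hablip := smul_lip (M := 1) halip hblip (fun x => abs_le.2 ⟨by linarith [ha0 x], ha1 x⟩)
    (fun x => (hb2 x).trans (by norm_num))
  set f : EVec n → EVec n := fun x => x + a x • b x with hf
  have hflip := LipschitzWith.id.add hablip
  have hab : ∀ x, ‖a x • b x‖ ≤ 1 / 2 := by
    intro x
    rw [norm_smul, Real.norm_of_nonneg (ha0 x)]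
    nlinarith [ha0 x, ha1 x, hb2 x, norm_nonneg (b x)]
  have hf1 : ∀ x, ‖x‖ ≤ 1 → f x = H x := by
    intro x hx1
    have : a x = 1 := by simp only [ha]; rw [min_eq_left (by linarith)]; simp
    simp [hf, this, hb, rp_small hx1]
  have hf2 : ∀ x, 2 ≤ ‖x‖ → f x = x := by
    intro x hx1
    have : a x = 0 := by simp only [ha]; apply max_eq_left; exact (min_le_right _ _).trans (by linarith)
    simp [hf, this]
  set ρ' := min ρ (1 / 2) with hρ'
  have hρ'0 : 0 < ρ' := by positivity
  have hρ'3 : ρ' ≤ 3 := (min_le_right _ _).trans (by norm_num)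
  have hflow : ∀ x, ρ' ≤ ‖f x‖ := by
    intro x
    rcases le_total ‖x‖ 1 with h1 | h1
    · rw [hf1 x h1]; exact (min_le_left _ _).trans (hρH x h1)
    · refine (min_le_right _ _).trans ?_
      have := norm_sub_le (f x) (a x • b x)
      have e : f x - a x • b x = x := by simp [hf]
      rw [e] at this
      linarith [hab x]
  have hfup : ∀ x, ‖x‖ ≤ 3 → ‖f x‖ ≤ 3 := by
    intro x hx3
    rcases le_total 2 ‖x‖ with h1 | h1
    · rwa [hf2 x h1]
    · have := norm_add_le x (a x • b x)
      have := hab x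
      simp only [hf]; linarith
  obtain ⟨KN, hN⟩ := NN_lip (n := n) ρ' 3
  set F : EVec n → EVec n := fun x => NN ρ' 3 (f x) with hF
  have hFlip : LipschitzWith (KN * _) F := hN.comp hflip
  have hu : LipschitzWith _ (fun x => F x - x) := hFlip.sub LipschitzWith.id
  have hdeg := degree_one (R := 3) hu (by
    intro x hx3
    have : F x = x := by
      simp only [hF]; rw [hf2 x (by linarith)]; exact NN_large hρ'0 hρ'3 hx3
    simp [this])
  have hz : ∫ x in Metric.ball (0 : EVec n) 3, (ContinuousLinearMap.id ℝ (EVec n) + fderiv ℝ (fun x => F x - x) x).det = 0 := by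
    rw [← integral_zero (EVec n) ℝ (μ := volume.restrict (Metric.ball (0 : EVec n) 3))]
    refine setIntegral_congr_ae Metric.isOpen_ball.measurableSet ?_
    filter_upwards [hFlip.ae_differentiableAt (μ := volume)] with x hxd hxb
    have hd : fderiv ℝ (fun x => F x - x) x = fderiv ℝ F x - ContinuousLinearMap.id ℝ (EVec n) :=
      (hxd.hasFDerivAt.sub (hasFDerivAt_id x)).fderiv
    rw [hd, add_sub_cancel]
    by_contra hdet
    have hev : (fun z => ⟪F z, F z⟫) =ᶠ[𝓝 x] fun _ => (9:ℝ) := by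
      filter_upwards [Metric.isOpen_ball.mem_nhds hxb] with z hz
      have hz3 : ‖z‖ ≤ 3 := by simpa using (Metric.mem_ball.1 hz).le
      rw [real_inner_self_eq_norm_sq, NN_mid_norm hρ'0 hρ'3 (hfup z hz3) (hflow z)]; norm_num
    have h9 : ⟪F x, F x⟫ = 9 := hev.eq_of_nhds
    have hder := hxd.hasFDerivAt.inner ℝ hxd.hasFDerivAt
    have h0 := (hder.congr_of_eventuallyEq hev.symm).unique (hasFDerivAt_const (9:ℝ) x)
    have hsurj : Function.Surjective (fderiv ℝ F x) := by
      have hU : IsUnit (LinearMap.det (fderiv ℝ F x : EVec n →ₗ[ℝ] EVec n)) := isUnit_iff_ne_zero.2 hdet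
      exact ((Module.End.isUnit_iff _).1 ((LinearMap.isUnit_iff_isUnit_det _).2 hU)).2
    obtain ⟨v, hv⟩ := hsurj (F x)
    have h1 := congrArg (fun L => L v) h0
    simp [fderivInnerCLM_apply, hv] at h1
    rw [real_inner_self_eq_norm_sq] at h9
    simp [h1] at h9
  rw [hz] at hdeg
  have : 0 < volume.real (Metric.ball (0 : EVec n) 3) := ENNReal.toReal_pos (Metric.measure_ball_pos _ _ (by norm_num)).ne' measure_ball_lt_top.ne
  linarith

lemma inv_dom_unit {n : ℕ} {h k : EVec n → EVec n} {K K' : NNReal} (hh : LipschitzWith K h)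
    (hk : LipschitzWith K' k) (hkh : ∀ x, ‖x‖ ≤ 1 → k (h x) = x) :
    h '' Metric.closedBall 0 1 ∈ 𝓝 (h 0) := by
  by_contra hcon
  set ε : ℝ := 1 / (4 * (K' + 1)) with hε
  have hε0 : 0 < ε := by positivity
  have hKε : K' * ε ≤ 1 / 4 := by
    rw [hε, mul_one_div, div_le_div_iff₀ (by positivity) (by norm_num)]; linarith
  obtain ⟨c, hc, hcn⟩ : ∃ c ∈ Metric.ball (h 0) ε, c ∉ h '' Metric.closedBall 0 1 := by
    by_contra! hall
    exact hcon (Filter.mem_of_superset (Metric.ball_mem_nhds _ hε0) hall)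
  obtain ⟨ρ, hρ, hρε, hρh⟩ : ∃ ρ > 0, ρ ≤ ε ∧ ∀ x, ‖x‖ ≤ 1 → ρ ≤ ‖h x - c‖ := by
    obtain ⟨x0, h0, hmin⟩ := (isCompact_closedBall (0 : EVec n) 1).exists_isMinOn ⟨0, by simp⟩
      ((hh.continuous.sub continuous_const).norm.continuousOn (f := fun x => ‖h x - c‖))
    refine ⟨min ‖h x0 - c‖ ε, lt_min (norm_pos_iff.2 ?_) hε0, min_le_right _ _, 
      fun x hx => (min_le_left _ _).trans (hmin (by simpa using hx))⟩
    intro h1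
    exact hcn ⟨x0, h0, sub_eq_zero.1 h1⟩
  set m : ℝ := (ε - ‖h 0 - c‖) / (K + 1) with hm
  have hm0 : 0 < m := by
    rw [Metric.mem_ball, dist_eq_norm, norm_sub_rev] at hc
    apply div_pos <;> [linarith; positivity]
  obtain ⟨v, hv, hvn⟩ : ∃ v ∈ Metric.ball (0 : EVec n) (min m (1 / 4)), v ∉ k '' Metric.sphere c ε := by
    by_contra! hall
    have h1 : volume (Metric.ball (0 : EVec n) (min m (1 / 4))) ≤ volume (k '' Metric.sphere c ε) :=
      measure_mono hall
    have h2 := lip_vol (hk.lipschitzOnWith (s := Metric.sphere c ε))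
    rw [Measure.addHaar_sphere_of_ne_zero _ _ hε0.ne', mul_zero] at h2
    have h3 := Metric.measure_ball_pos volume (0 : EVec n) (lt_min hm0 (by norm_num : (0:ℝ) < 1 / 4))
    exact absurd (h3.trans_le (h1.trans h2)) (lt_irrefl _)
  have hvm : ‖v‖ < m := by
    have := (mem_ball_zero_iff.1 hv); exact this.trans_le (min_le_left _ _)
  have hv4 : ‖v‖ < 1 / 4 := by
    have := (mem_ball_zero_iff.1 hv); exact this.trans_le (min_le_right _ _)
  obtain ⟨KN, hN⟩ := NN_lip (n := n) ρ ε
  have hHlip := (hk.comp ((LipschitzWith.const c).add (hN.comp (hh.sub (LipschitzWith.const c))))).sub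
    (LipschitzWith.const v)
  obtain ⟨x, hx1, hx0⟩ := zero_exists hHlip (by
    intro x hx1
    simp only [Function.comp]
    rcases le_total ε ‖h x - c‖ with h1 | h1
    · rw [NN_large hρ hρε h1, add_sub_cancel, hkh x hx1]
      have : x - v - x = -v := by abel
      rw [this, norm_neg]; linarith
    · have h2 := NN_mid_dist hρ hρε h1 (hρh x hx1)
      have h3 := hk.dist_le_mul (c + NN ρ ε (h x - c)) (h x)
      rw [hkh x hx1, dist_eq_norm, dist_eq_norm] at h3
      have e : c + NN ρ ε (h x - c) - h x = NN ρ ε (h x - c) - (h x - c) := by abel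
      rw [e] at h3
      have h4 : (K' : ℝ) * ‖NN ρ ε (h x - c) - (h x - c)‖ ≤ K' * ε := by gcongr
      have e2 : k (c + NN ρ ε (h x - c)) - v - x = (k (c + NN ρ ε (h x - c)) - x) - v := by abel
      rw [e2]
      have := norm_sub_le (k (c + NN ρ ε (h x - c)) - x) v
      linarith)
  simp only [Function.comp] at hx0
  rcases le_or_gt ε ‖h x - c‖ with h1 | h1
  · rw [NN_large hρ hρε h1, add_sub_cancel, hkh x hx1, sub_eq_zero] at hx0
    have h2 := hh.dist_le_mul x 0
    rw [dist_zero_right, dist_eq_norm] at h2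
    have h3 : ‖h x - c‖ ≤ ‖h x - h 0‖ + ‖h 0 - c‖ := by
      simpa using norm_add_le (h x - h 0) (h 0 - c)
    rw [← hx0, hm, lt_div_iff₀ (by positivity)] at hvm
    have := norm_nonneg x
    nlinarith
  · apply hvn
    refine ⟨_, ?_, sub_eq_zero.1 hx0⟩
    rw [mem_sphere_iff_norm, add_sub_cancel_left]
    exact NN_mid_norm hρ hρε h1.le (hρh x hx1)

lemma inv_dom {n : ℕ} {h k : EVec n → EVec n} {K K' : NNReal} (hh : LipschitzWith K h)
    (hk : LipschitzWith K' k) {p : EVec n} {U : Set (EVec n)} (hU : U ∈ 𝓝 p)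
    (hkh : ∀ x ∈ U, k (h x) = x) : h '' U ∈ 𝓝 (h p) := by
  obtain ⟨r, hr, hrU⟩ := Metric.nhds_basis_closedBall.mem_iff.1 hU
  have hmem : ∀ x : EVec n, ‖x‖ ≤ 1 → p + r • x ∈ U := by
    intro x hx
    apply hrU
    rw [mem_closedBall_iff_norm, add_sub_cancel_left, norm_smul, Real.norm_of_nonneg hr.le]
    nlinarith
  have h1 := hh.comp ((LipschitzWith.const p).add (lipschitzWith_smul (β := EVec n) r))
  have h2 := (lipschitzWith_smul (β := EVec n) r⁻¹).comp (hk.sub (LipschitzWith.const p))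
  have := inv_dom_unit h1 h2 (by
    intro x hx
    simp only [Function.comp]
    rw [hkh _ (hmem x hx), add_sub_cancel_left, smul_smul, inv_mul_cancel₀ hr.ne', one_smul])
  simp only [Function.comp, smul_zero, add_zero] at this
  refine Filter.mem_of_superset this ?_
  rintro _ ⟨x, hx, rfl⟩
  exact ⟨_, hmem x (by simpa using hx), rfl⟩

lemma ftc_one {n : ℕ} {f : EVec n → ℝ} (hf : ContDiff ℝ 1 f) {γ : ℝ → EVec n} {Λ : NNReal}
    (hγ : LipschitzWith Λ γ) :
    f (γ 1) - f (γ 0) ≤ Λ * ∫ t in (0:ℝ)..1, ‖fderiv ℝ f (γ t)‖ := by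
  have hc : Continuous (fun t => (Λ : ℝ) * ‖fderiv ℝ f (γ t)‖) :=
    continuous_const.mul ((hf.continuous_fderiv (by norm_num)).comp hγ.continuous).norm
  have hB : ∀ x, HasDerivAt (fun s => ∫ t in (0:ℝ)..s, (Λ : ℝ) * ‖fderiv ℝ f (γ t)‖)
      ((Λ : ℝ) * ‖fderiv ℝ f (γ x)‖) x := fun x =>
    intervalIntegral.integral_hasDerivAt_right (hc.intervalIntegrable _ _)
      (hc.stronglyMeasurableAtFilter _ _) hc.continuousAt
  have key := image_le_of_liminf_slope_right_le_deriv_boundary (a := 0) (b := 1)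
    (f := fun t => f (γ t) - f (γ 0)) (B := fun s => ∫ t in (0:ℝ)..s, (Λ : ℝ) * ‖fderiv ℝ f (γ t)‖)
    (B' := fun t => (Λ : ℝ) * ‖fderiv ℝ f (γ t)‖)
    (((hf.continuous.comp hγ.continuous).sub continuous_const).continuousOn) (by simp)
    (fun x _ => (hB x).continuousAt.continuousWithinAt) (fun x _ => (hB x).hasDerivWithinAt)
    (by
      intro x _ r hr
      apply Eventually.frequently
      obtain ⟨ε, hε, hεr⟩ : ∃ ε : ℝ, 0 < ε ∧ (Λ : ℝ) * (‖fderiv ℝ f (γ x)‖ + ε) < r := by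
        refine ⟨(r - Λ * ‖fderiv ℝ f (γ x)‖) / (2 * (Λ + 1)), div_pos (by linarith) (by positivity), ?_⟩
        rw [mul_add, ← lt_sub_iff_add_lt', ← mul_div_assoc, div_lt_iff₀ (by positivity)]
        have : (0:ℝ) ≤ Λ := Λ.2
        nlinarith
      have hd := ((hf.differentiable (by norm_num)) (γ x)).hasFDerivAt
      have hlo := (hasFDerivAt_iff_isLittleO.1 hd).def hε
      have h2 := (hγ.continuous.continuousAt (x := x)).eventually hlo
      have h3 := h2.filter_mono (nhdsWithin_le_nhds (s := Ioi x))
      filter_upwards [h3, self_mem_nhdsWithin] with z hz hzx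
      have hzx' : x < z := hzx
      rw [slope_def_field, div_lt_iff₀ (by linarith)]
      have hL := hγ.dist_le_mul z x
      rw [dist_eq_norm, Real.dist_eq, abs_of_pos (by linarith)] at hL
      have h5 := (fderiv ℝ f (γ x)).le_opNorm (γ z - γ x)
      have h6 := (abs_le.1 hz).2
      have h7 := (abs_le.1 h5).2
      have h8 : (‖fderiv ℝ f (γ x)‖ + ε) * ‖γ z - γ x‖ ≤ (‖fderiv ℝ f (γ x)‖ + ε) * (Λ * (z - x)) := by
        gcongr
      have h9 : 0 < z - x := by linarith
      nlinarith)
    (x := 1) (by simp)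
  simpa using key

lemma ftc_enn {n : ℕ} {f : EVec n → ℝ} (hf : ContDiff ℝ 1 f) {γ : ℝ → EVec n} {Λ : NNReal}
    (hγ : LipschitzWith Λ γ) :
    ‖f (γ 0) - f (γ 1)‖ₑ ≤ Λ * ∫⁻ t in Ioc (0:ℝ) 1, ‖fderiv ℝ f (γ t)‖ₑ := by
  have h1 := ftc_one hf hγ
  have h2 := ftc_one hf.neg hγ
  have e : ∀ x, ‖fderiv ℝ (fun y => -f y) x‖ = ‖fderiv ℝ f x‖ := by
    intro x; rw [fderiv_fun_neg, norm_neg]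
  simp only [e] at h2
  have h3 : ‖f (γ 0) - f (γ 1)‖ ≤ Λ * ∫ t in (0:ℝ)..1, ‖fderiv ℝ f (γ t)‖ := by
    rw [Real.norm_eq_abs, abs_le]; constructor <;> linarith
  have hc : Continuous (fun t => ‖fderiv ℝ f (γ t)‖) :=
    ((hf.continuous_fderiv (by norm_num)).comp hγ.continuous).norm
  have h4 : ENNReal.ofReal (∫ t in (0:ℝ)..1, ‖fderiv ℝ f (γ t)‖) = ∫⁻ t in Ioc (0:ℝ) 1, ‖fderiv ℝ f (γ t)‖ₑ := by
    rw [intervalIntegral.integral_of_le zero_le_one, ofReal_integral_eq_lintegral_ofReal]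
    · simp_rw [ofReal_norm]
    · exact (hc.integrableOn_Icc (a := 0) (b := 1)).mono_set Ioc_subset_Icc_self
    · exact ae_of_all _ fun _ => norm_nonneg _
  rw [← h4, ← ofReal_norm, ← ENNReal.ofReal_coe_nnreal, ← ENNReal.ofReal_mul (by positivity)]
  exact ENNReal.ofReal_le_ofReal h3

lemma push_bound {n : ℕ} {Φ : EVec n → EVec n} (hΦ : Continuous Φ) {S T : Set (EVec n)}
    (hS : MeasurableSet S) (hT : MeasurableSet T) (hST : MapsTo Φ S T) {Q : NNReal}
    (hQ : ∀ y ∈ S, ∀ y' ∈ S, dist y y' ≤ Q * dist (Φ y) (Φ y'))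
    {g : EVec n → ℝ≥0∞} (hg : Measurable g) :
    ∫⁻ y in S, g (Φ y) ≤ (Q : ℝ≥0∞) ^ n * ∫⁻ x in T, g x := by
  have hle : Measure.map Φ (volume.restrict S) ≤ (Q : ℝ≥0∞) ^ n • (volume.restrict T) := by
    refine Measure.le_iff.2 fun B hB => ?_
    rw [Measure.map_apply hΦ.measurable hB, Measure.restrict_apply (hΦ.measurable hB), Measure.smul_apply,
      Measure.restrict_apply hB, smul_eq_mul]
    have hinj : InjOn Φ S := by
      intro y hy y' hy' h
      have := hQ y hy y' hy'
      rw [h, dist_self, mul_zero] at this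
      exact dist_le_zero.1 this
    rcases (Φ ⁻¹' B ∩ S).eq_empty_or_nonempty with he | hne
    · rw [he]; simp
    have himg : Function.invFunOn Φ S '' (Φ '' (Φ ⁻¹' B ∩ S)) = Φ ⁻¹' B ∩ S := by
      rw [image_image]
      have : ∀ y ∈ Φ ⁻¹' B ∩ S, Function.invFunOn Φ S (Φ y) = y := fun y hy =>
        hinj.leftInvOn_invFunOn hy.2
      rw [image_congr this, image_id']
    have hlip : LipschitzOnWith Q (Function.invFunOn Φ S) (Φ '' (Φ ⁻¹' B ∩ S)) := by
      refine LipschitzOnWith.of_dist_le_mul ?_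
      rintro _ ⟨y, hy, rfl⟩ _ ⟨y', hy', rfl⟩
      rw [hinj.leftInvOn_invFunOn hy.2, hinj.leftInvOn_invFunOn hy'.2]
      exact hQ y hy.2 y' hy'.2
    have := lip_vol hlip
    rw [himg] at this
    refine this.trans ?_
    gcongr
    rintro _ ⟨y, hy, rfl⟩
    exact ⟨hy.1, hST hy.2⟩
  calc ∫⁻ y in S, g (Φ y) = ∫⁻ x, g x ∂(Measure.map Φ (volume.restrict S)) :=
        (lintegral_map hg hΦ.measurable).symm
    _ ≤ ∫⁻ x, g x ∂((Q : ℝ≥0∞) ^ n • (volume.restrict T)) := lintegral_mono' hle le_rfl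
    _ = _ := by rw [lintegral_smul_measure, smul_eq_mul]

lemma time_swap {α : Type*} [MeasurableSpace α] {μ : Measure α} [SFinite μ] {F : α → ℝ≥0∞}
    {H : α → ℝ → ℝ≥0∞} {A B : NNReal} {I : ℝ≥0∞} (hm : Measurable (fun q : α × ℝ => H q.1 q.2))
    (h1 : ∀ᵐ p ∂μ, F p ≤ A * ∫⁻ t in Ioc (0:ℝ) 1, H p t)
    (h2 : ∀ t ∈ Ioc (0:ℝ) 1, ∫⁻ p, H p t ∂μ ≤ B * I) :
    ∫⁻ p, F p ∂μ ≤ (A : ℝ≥0∞) * (B * I) := by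
  refine (lintegral_mono_ae h1).trans ?_
  rw [lintegral_const_mul' _ _ ENNReal.coe_ne_top]
  gcongr
  rw [lintegral_lintegral_swap hm.aemeasurable]
  refine (setLIntegral_mono' measurableSet_Ioc h2).trans ?_
  rw [setLIntegral_const]
  simp

lemma c1_bound {n : ℕ} {h k : EVec n → EVec n} {K D V : NNReal} (hh : LipschitzWith K h)
    (hk : LipschitzWith K k) {C : Set (EVec n)} (hC : Convex ℝ C) (hCc : IsCompact C)
    (hhk : ∀ w ∈ C, h (k w) = w) (hD : ∀ w ∈ C, ∀ w' ∈ C, dist w w' ≤ D)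
    (hV : volume (k '' C) ≤ V) {f : EVec n → ℝ} (hf : ContDiff ℝ 1 f) :
    ∫⁻ p in (k '' C) ×ˢ (k '' C), ‖f p.1 - f p.2‖ₑ ∂((volume : Measure (EVec n)).prod volume) ≤
      ((K * D * ((2 * K * K) ^ n * V) : NNReal) : ℝ≥0∞) * ∫⁻ x in k '' C, ‖fderiv ℝ f x‖ₑ := by
  set S := k '' C with hSdef
  have hSc : IsCompact S := hCc.image hk.continuous
  have hS : MeasurableSet S := hSc.measurableSet
  have hSC : ∀ x ∈ S, h x ∈ C := by
    rintro _ ⟨w, hw, rfl⟩; rw [hhk w hw]; exact hw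
  have hkh : ∀ x ∈ S, k (h x) = x := by
    rintro _ ⟨w, hw, rfl⟩; rw [hhk w hw]
  set G : EVec n → ℝ≥0∞ := fun x => ‖fderiv ℝ f x‖ₑ with hG
  have hGc : Continuous G := (hf.continuous_fderiv (by norm_num)).enorm
  set m : ℝ → EVec n → EVec n → EVec n := fun t x y => k ((1 - t) • h x + t • h y) with hm
  have hmc : Continuous (fun q : (EVec n × EVec n) × ℝ => m q.2 q.1.1 q.1.2) := by
    have := hh.continuous
    exact hk.continuous.comp (by fun_prop)
  have hseg : ∀ t ∈ Ioc (0:ℝ) 1, ∀ x ∈ S, ∀ y ∈ S, (1 - t) • h x + t • h y ∈ C := by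
    intro t ht x hx y hy
    exact hC (hSC x hx) (hSC y hy) (by linarith [ht.2]) ht.1.le (by ring)
  have hpt : ∀ p ∈ S ×ˢ S, ‖f p.1 - f p.2‖ₑ ≤ ((K * D : NNReal) : ℝ≥0∞) * ∫⁻ t in Ioc (0:ℝ) 1, G (m t p.1 p.2) := by
    rintro ⟨x, y⟩ ⟨hx, hy⟩
    have hl : LipschitzWith (K * D) (fun t => m t x y) := by
      apply hk.comp
      refine LipschitzWith.of_dist_le_mul fun s t => ?_
      have e : (1 - s) • h x + s • h y - ((1 - t) • h x + t • h y) = (s - t) • (h y - h x) := by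
        module
      rw [dist_eq_norm, e, norm_smul, ← dist_eq_norm, ← dist_eq_norm, mul_comm]
      gcongr
      exact hD _ (hSC y hy) _ (hSC x hx)
    have := ftc_enn hf hl
    simpa [hm, hkh x hx, hkh y hy] using this
  have hfix : ∀ t ∈ Ioc (0:ℝ) 1, ∫⁻ p in S ×ˢ S, G (m t p.1 p.2) ∂((volume : Measure (EVec n)).prod volume) ≤
      (((2 * K * K) ^ n * V : NNReal) : ℝ≥0∞) * ∫⁻ x in S, G x := by
    intro t ht
    have hmt : Continuous (fun p : EVec n × EVec n => m t p.1 p.2) := 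
      hmc.comp (by fun_prop : Continuous fun p : EVec n × EVec n => (p, t))
    have hmeas : Measurable (fun p : EVec n × EVec n => G (m t p.1 p.2)) := (hGc.comp hmt).measurable
    rw [← Measure.prod_restrict]
    have hfin : ∀ I : ℝ≥0∞, ∫⁻ x in S, ((2 * K * K : NNReal) : ℝ≥0∞) ^ n * I ≤ (((2 * K * K) ^ n * V : NNReal) : ℝ≥0∞) * I := by
      intro I
      rw [setLIntegral_const, ENNReal.coe_mul ((2*K*K)^n) V, ENNReal.coe_pow, mul_right_comm]
      gcongr
    rcases le_total (1 / 2) t with h2 | h2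
    · rw [lintegral_prod _ hmeas.aemeasurable]
      refine (setLIntegral_mono' hS (g := fun _ => ((2 * K * K : NNReal) : ℝ≥0∞) ^ n * ∫⁻ x in S, G x) fun x hx => ?_).trans (hfin _)
      refine push_bound (Φ := fun y => m t x y) (hmt.comp (by fun_prop : Continuous fun y => (x, y))) hS hS
        (fun y hy => ⟨_, hseg t ht x hx y hy, rfl⟩) ?_ hGc.measurable
      intro y hy y' hy'
      have h3 := hh.dist_le_mul (m t x y) (m t x y')
      have h4 := hk.dist_le_mul (h y) (h y')
      rw [hkh y hy, hkh y' hy'] at h4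
      simp only [hm] at h3 ⊢
      rw [hhk _ (hseg t ht x hx y hy), hhk _ (hseg t ht x hx y' hy'), dist_add_left, dist_smul₀,
        Real.norm_of_nonneg ht.1.le] at h3
      push_cast
      have h5 : dist (h y) (h y') ≤ 2 * (t * dist (h y) (h y')) := by
        nlinarith [dist_nonneg (x := h y) (y := h y')]
      calc dist y y' ≤ K * dist (h y) (h y') := h4
        _ ≤ K * (2 * (K * dist (k ((1 - t) • h x + t • h y)) (k ((1 - t) • h x + t • h y')))) := by
          gcongr; linarith
        _ = _ := by ring
    · rw [lintegral_prod_symm _ hmeas.aemeasurable]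
      refine (setLIntegral_mono' hS (g := fun _ => ((2 * K * K : NNReal) : ℝ≥0∞) ^ n * ∫⁻ x in S, G x) fun x hx => ?_).trans (hfin _)
      refine push_bound (Φ := fun y => m t y x) (hmt.comp (by fun_prop : Continuous fun y => (y, x))) hS hS
        (fun y hy => ⟨_, hseg t ht y hy x hx, rfl⟩) ?_ hGc.measurable
      intro y hy y' hy'
      have h3 := hh.dist_le_mul (m t y x) (m t y' x)
      have h4 := hk.dist_le_mul (h y) (h y')
      rw [hkh y hy, hkh y' hy'] at h4
      simp only [hm] at h3 ⊢
      rw [hhk _ (hseg t ht y hy x hx), hhk _ (hseg t ht y' hy' x hx), dist_add_right, dist_smul₀,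
        Real.norm_of_nonneg (by linarith)] at h3
      push_cast
      have h5 : dist (h y) (h y') ≤ 2 * ((1 - t) * dist (h y) (h y')) := by
        nlinarith [dist_nonneg (x := h y) (y := h y')]
      calc dist y y' ≤ K * dist (h y) (h y') := h4
        _ ≤ K * (2 * (K * dist (k ((1 - t) • h y + t • h x)) (k ((1 - t) • h y' + t • h x)))) := by
          gcongr; linarith
        _ = _ := by ring
  have hmm : Measurable (fun q : (EVec n × EVec n) × ℝ => G (m q.2 q.1.1 q.1.2)) := (hGc.comp hmc).measurable
  have hSS : MeasurableSet (S ×ˢ S) := hS.prod hS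
  have := time_swap (μ := ((volume : Measure (EVec n)).prod volume).restrict (S ×ˢ S))
    (F := fun p => ‖f p.1 - f p.2‖ₑ) (H := fun p t => G (m t p.1 p.2))
    (A := K * D) (B := ((2 * K * K) ^ n * V : NNReal)) (I := ∫⁻ x in S, G x) hmm
    ((ae_restrict_iff' hSS).2 (ae_of_all _ hpt)) hfix
  rw [ENNReal.coe_mul (K * D), mul_assoc]
  exact this

def SW {n : ℕ} (Ω : Set (EVec n)) (u : EVec n → ℝ) (g : Fin n → EVec n → ℝ) : Prop :=
  Measurable u ∧ Integrable u ∧ (∀ i, Measurable (g i)) ∧ (∀ i, Integrable (g i)) ∧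
  ∀ φ : EVec n → ℝ, ContDiff ℝ 1 φ → HasCompactSupport φ → tsupport φ ⊆ Ω → ∀ i,
    ∫ x, u x * fderiv ℝ φ x (EuclideanSpace.single i 1) = - ∫ x, g i x * φ x

noncomputable def moll {n : ℕ} (b : ContDiffBump (0 : EVec n)) (u : EVec n → ℝ) : EVec n → ℝ :=
  MeasureTheory.convolution (b.normed volume) u (ContinuousLinearMap.lsmul ℝ ℝ) volume

lemma moll_contDiff {n : ℕ} (b : ContDiffBump (0 : EVec n)) {u : EVec n → ℝ} (hu : Integrable u) :
    ContDiff ℝ 1 (moll b u) := 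
  b.hasCompactSupport_normed.contDiff_convolution_left (n := 1) _ b.contDiff_normed hu.locallyIntegrable

lemma moll_deriv {n : ℕ} (b : ContDiffBump (0 : EVec n)) {Ω : Set (EVec n)} {u : EVec n → ℝ}
    {g : Fin n → EVec n → ℝ} (h : SW Ω u g) {x : EVec n} (hx : Metric.closedBall x b.rOut ⊆ Ω) (i : Fin n) :
    fderiv ℝ (moll b u) x (EuclideanSpace.single i 1) = ∫ t, g i t * b.normed volume (x - t) := by
  obtain ⟨-, hu, -, -, hw⟩ := h
  have hφ : ContDiff ℝ 1 (b.normed volume) := b.contDiff_normed (n := 1)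
  have h1 := b.hasCompactSupport_normed (μ := volume) |>.hasFDerivAt_convolution_left (ContinuousLinearMap.lsmul ℝ ℝ)
    hφ hu.locallyIntegrable x
  rw [moll, h1.fderiv, convolution_eq_swap]
  have hint := (((b.hasCompactSupport_normed (μ := volume)).fderiv (𝕜 := ℝ)).convolutionExists_left
    ((ContinuousLinearMap.lsmul ℝ ℝ : ℝ →L[ℝ] ℝ →L[ℝ] ℝ).precompL (EVec n)) (hφ.continuous_fderiv (by norm_num)) hu.locallyIntegrable x).integrable_swap
  rw [ContinuousLinearMap.integral_apply hint]
  simp only [ContinuousLinearMap.precompL_apply, ContinuousLinearMap.lsmul_apply, smul_eq_mul]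
  set ψ : EVec n → ℝ := fun t => b.normed volume (x - t) with hψ
  have hψd : ∀ t, fderiv ℝ ψ t (EuclideanSpace.single i 1) = - fderiv ℝ (b.normed volume) (x - t) (EuclideanSpace.single i 1) := by
    intro t
    have h2 : HasFDerivAt ψ ((fderiv ℝ (b.normed volume) (x - t)).comp (-(ContinuousLinearMap.id ℝ (EVec n)))) t := by
      have h3 := ((hφ.differentiable (by norm_num)) (x - t)).hasFDerivAt
      exact h3.comp t ((hasFDerivAt_id t).const_sub x)
    rw [h2.fderiv]; simp
  have hsupp : Function.support ψ ⊆ Metric.closedBall x b.rOut := by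
    intro t ht
    have : x - t ∈ Function.support (b.normed volume) := ht
    rw [b.support_normed_eq] at this
    rw [mem_ball_zero_iff] at this
    rw [Metric.mem_closedBall, dist_comm, dist_eq_norm]
    exact this.le
  have hts : tsupport ψ ⊆ Metric.closedBall x b.rOut := closure_minimal hsupp Metric.isClosed_closedBall
  have key := hw ψ (hφ.comp (contDiff_const.sub contDiff_id))
    (HasCompactSupport.of_support_subset_isCompact (isCompact_closedBall _ _) hsupp) (hts.trans hx) i
  simp only [hψd, mul_neg, integral_neg, neg_inj] at key
  rw [← key]
  congr 1; ext t; ring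

lemma opnorm_sum {n : ℕ} (T : EVec n →L[ℝ] ℝ) : ‖T‖ ≤ ∑ i, ‖T (EuclideanSpace.single i 1)‖ := by
  refine T.opNorm_le_bound (Finset.sum_nonneg fun _ _ => norm_nonneg _) fun x => ?_
  have hx : x = ∑ i, x i • EuclideanSpace.single i (1:ℝ) := by
    ext j; simp [Pi.single_apply]
  conv_lhs => rw [hx]
  rw [map_sum, Finset.sum_mul]
  refine (norm_sum_le _ _).trans (Finset.sum_le_sum fun i _ => ?_)
  rw [map_smul, norm_smul, mul_comm]
  gcongr
  exact PiLp.norm_apply_le x i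

lemma opnorm_sum_e {n : ℕ} (T : EVec n →L[ℝ] ℝ) : ‖T‖ₑ ≤ ∑ i, ‖T (EuclideanSpace.single i 1)‖ₑ := by
  simp_rw [← ofReal_norm]
  rw [← ENNReal.ofReal_sum_of_nonneg (fun _ _ => norm_nonneg _)]
  exact ENNReal.ofReal_le_ofReal (opnorm_sum T)

lemma moll_fderiv_bound {n : ℕ} (b : ContDiffBump (0 : EVec n)) {Ω S : Set (EVec n)} {u : EVec n → ℝ}
    {g : Fin n → EVec n → ℝ} (h : SW Ω u g) (hS : MeasurableSet S)
    (hx : ∀ x ∈ S, Metric.closedBall x b.rOut ⊆ Ω) :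
    ∫⁻ x in S, ‖fderiv ℝ (moll b u) x‖ₑ ≤ ∑ i, ∫⁻ x, ‖g i x‖ₑ := by
  have hbm : Measurable (b.normed volume) := b.continuous_normed.measurable
  have hb1 : ∀ t, ∫⁻ x, ‖b.normed volume (x - t)‖ₑ = 1 := by
    intro t
    rw [lintegral_sub_right_eq_self (fun x => ‖b.normed volume x‖ₑ) t, ← ofReal_integral_norm_eq_lintegral_enorm b.integrable_normed]
    simp_rw [Real.norm_of_nonneg (b.nonneg_normed _)]
    rw [b.integral_normed]; simp
  calc ∫⁻ x in S, ‖fderiv ℝ (moll b u) x‖ₑ 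
      ≤ ∫⁻ x in S, ∑ i, ∫⁻ t, ‖g i t‖ₑ * ‖b.normed volume (x - t)‖ₑ := by
        refine setLIntegral_mono' hS fun x hxS => (opnorm_sum_e _).trans (Finset.sum_le_sum fun i _ => ?_)
        rw [moll_deriv b h (hx x hxS) i]
        refine (enorm_integral_le_lintegral_enorm _).trans_eq ?_
        simp_rw [enorm_mul]
    _ ≤ ∫⁻ x, ∑ i, ∫⁻ t, ‖g i t‖ₑ * ‖b.normed volume (x - t)‖ₑ := setLIntegral_le_lintegral _ _
    _ = ∑ i, ∫⁻ x, ∫⁻ t, ‖g i t‖ₑ * ‖b.normed volume (x - t)‖ₑ := by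
        refine lintegral_finsetSum _ fun i _ => ?_
        have := h.2.2.1 i
        exact Measurable.lintegral_prod_right (by fun_prop)
    _ = _ := by
        refine Finset.sum_congr rfl fun i _ => ?_
        have := h.2.2.1 i
        rw [lintegral_lintegral_swap (by fun_prop)]
        refine lintegral_congr fun t => ?_
        rw [lintegral_const_mul _ (by fun_prop), hb1, mul_one]

lemma sw_bound {n : ℕ} {Ω S : Set (EVec n)} (hΩ : IsOpen Ω) (hS : IsCompact S) (hSΩ : S ⊆ Ω) {c : NNReal}
    (hc : ∀ f : EVec n → ℝ, ContDiff ℝ 1 f → ∫⁻ p in S ×ˢ S, ‖f p.1 - f p.2‖ₑ ∂((volume : Measure (EVec n)).prod volume) ≤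
      c * ∫⁻ x in S, ‖fderiv ℝ f x‖ₑ) {u : EVec n → ℝ} {g : Fin n → EVec n → ℝ} (h : SW Ω u g) :
    ∫⁻ p in S ×ˢ S, ‖u p.1 - u p.2‖ₑ ∂((volume : Measure (EVec n)).prod volume) ≤ c * ∑ i, ∫⁻ x, ‖g i x‖ₑ := by
  obtain ⟨δ, hδ, hδΩ⟩ := hS.exists_cthickening_subset_open hΩ hSΩ
  let b : ℕ → ContDiffBump (0 : EVec n) := fun j => 
    ⟨δ / (j + 1) / 2, δ / (j + 1), by positivity, half_lt_self (by positivity)⟩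
  have hb : ∀ j, ∀ x ∈ S, Metric.closedBall x (b j).rOut ⊆ Ω := by
    intro j x hx
    refine (Metric.closedBall_subset_cthickening hx _).trans ((Metric.cthickening_mono ?_ _).trans hδΩ)
    exact div_le_self hδ.le (by linarith [(Nat.cast_nonneg j : (0:ℝ) ≤ j)])
  have hlim : Tendsto (fun j => (b j).rOut) atTop (𝓝 0) := by
    have := tendsto_one_div_add_atTop_nhds_zero_nat (𝕜 := ℝ)
    have := this.const_mul δ
    simpa [b, div_eq_mul_inv] using this
  have hae := ContDiffBump.ae_convolution_tendsto_right_of_locallyIntegrable (K := 2) (μ := volume) (g := u) hlim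
    (Eventually.of_forall fun j => by simp only [b]; linarith) h.2.1.locallyIntegrable
  have hae' : ∀ᵐ x ∂(volume : Measure (EVec n)), Tendsto (fun j => moll (b j) u x) atTop (𝓝 (u x)) := hae
  have hp1 := Measure.quasiMeasurePreserving_fst (μ := (volume : Measure (EVec n))) (ν := (volume : Measure (EVec n))) |>.ae hae'
  have hp2 := Measure.quasiMeasurePreserving_snd (μ := (volume : Measure (EVec n))) (ν := (volume : Measure (EVec n))) |>.ae hae'
  have hcd := fun j => moll_contDiff (b j) h.2.1
  calc _ = ∫⁻ p in S ×ˢ S, liminf (fun j => ‖moll (b j) u p.1 - moll (b j) u p.2‖ₑ) atTop ∂((volume : Measure (EVec n)).prod volume) := by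
        refine lintegral_congr_ae (ae_restrict_of_ae ?_)
        filter_upwards [hp1, hp2] with p h1 h2
        exact ((h1.sub h2).enorm.liminf_eq).symm
    _ ≤ liminf (fun j => ∫⁻ p in S ×ˢ S, ‖moll (b j) u p.1 - moll (b j) u p.2‖ₑ ∂((volume : Measure (EVec n)).prod volume)) atTop := by
        refine lintegral_liminf_le fun j => ?_
        have := (hcd j).continuous
        fun_prop
    _ ≤ _ := by
        refine (liminf_le_liminf (v := fun _ => c * ∑ i, ∫⁻ x, ‖g i x‖ₑ) (Eventually.of_forall fun j => ?_)).trans_eq (by simp)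
        refine (hc _ (hcd j)).trans ?_
        gcongr
        exact moll_fderiv_bound (b j) h hS.measurableSet (hb j)

def GoodSet {n : ℕ} (Ω A : Set (EVec n)) : Prop :=
  ∃ C : NNReal, ∀ u g, SW Ω u g →
    ∫⁻ p in A ×ˢ A, ‖u p.1 - u p.2‖ₑ ∂((volume : Measure (EVec n)).prod volume) ≤ C * ∑ i, ∫⁻ x, ‖g i x‖ₑ

lemma chart_good {n : ℕ} {Ω : Set (EVec n)} (hΩ : IsOpen Ω) (hvol : volume Ω < ∞) {h k : EVec n → EVec n}
    {K : NNReal} (hh : LipschitzWith K h) (hk : LipschitzWith K k) (c e : EVec n) (r a : ℝ)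
    (hW : ∀ w ∈ Metric.ball c r ∩ {y | a < ⟪e, y⟫}, k w ∈ Ω ∧ h (k w) = w) :
    GoodSet Ω (k '' (Metric.ball c r ∩ {y | a < ⟪e, y⟫})) := by
  set W := Metric.ball c r ∩ {y | a < ⟪e, y⟫} with hWd
  set V := (volume Ω).toNNReal with hV
  have hV' : volume Ω = V := (ENNReal.coe_toNNReal hvol.ne).symm
  set D : NNReal := (2 * r).toNNReal
  refine ⟨K * D * ((2 * K * K) ^ n * V), fun u g hug => ?_⟩
  set C : ℕ → Set (EVec n) := fun j => Metric.closedBall c (r - 1 / (j + 1)) ∩ {y | a + 1 / (j + 1) ≤ ⟪e, y⟫} with hC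
  have hpos : ∀ j : ℕ, (0:ℝ) < 1 / (j + 1) := fun j => by positivity
  have hCW : ∀ j, C j ⊆ W := by
    rintro j y ⟨h1, h2⟩
    have := hpos j
    rw [Metric.mem_closedBall] at h1
    simp only [mem_ofPred_eq] at h2
    exact ⟨Metric.mem_ball.2 (by linarith), show a < _ by linarith⟩
  have hCm : Monotone C := by
    intro i j hij y hy
    have : (1:ℝ) / (j + 1) ≤ 1 / (i + 1) := by
      apply one_div_le_one_div_of_le (by positivity); exact_mod_cast Nat.succ_le_succ hij
    have h1 := Metric.mem_closedBall.1 hy.1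
    have h2 := hy.2
    simp only [mem_ofPred_eq] at h2
    exact ⟨Metric.mem_closedBall.2 (by linarith), show a + 1 / ((j:ℝ) + 1) ≤ ⟪e, y⟫ by linarith⟩
  have hCU : W = ⋃ j, C j := by
    refine subset_antisymm ?_ (iUnion_subset hCW)
    rintro y ⟨h1, h2⟩
    rw [Metric.mem_ball] at h1
    simp only [mem_ofPred_eq] at h2
    obtain ⟨j, hj⟩ := exists_nat_one_div_lt (show 0 < min (r - dist y c) (⟪e, y⟫ - a) by
      apply lt_min <;> linarith)
    rw [lt_min_iff] at hj
    refine mem_iUnion.2 ⟨j, Metric.mem_closedBall.2 (by linarith), show a + 1 / ((j:ℝ) + 1) ≤ ⟪e, y⟫ by linarith⟩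
  have hcl : ∀ j, IsClosed {y : EVec n | a + 1 / ((j:ℝ) + 1) ≤ ⟪e, y⟫} := fun j =>
    isClosed_le continuous_const (by fun_prop)
  have hCc : ∀ j, IsCompact (C j) := fun j => (isCompact_closedBall _ _).inter_right (hcl j)
  have hCx : ∀ j, Convex ℝ (C j) := fun j => (convex_closedBall _ _).inter
    (convex_halfSpace_ge (f := fun y => ⟪e, y⟫) (by constructor <;> intros <;> simp [inner_add_right, inner_smul_right]) _)
  have hkC : ∀ j, k '' C j ⊆ Ω := by
    rintro j _ ⟨w, hw, rfl⟩; exact (hW w (hCW j hw)).1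
  have hj : ∀ j, ∫⁻ p in (k '' C j) ×ˢ (k '' C j), ‖u p.1 - u p.2‖ₑ ∂((volume : Measure (EVec n)).prod volume) ≤
      ((K * D * ((2 * K * K) ^ n * V) : NNReal) : ℝ≥0∞) * ∑ i, ∫⁻ x, ‖g i x‖ₑ := by
    intro j
    refine sw_bound hΩ ((hCc j).image hk.continuous) (hkC j) (fun f hf => ?_) hug
    refine c1_bound hh hk (hCx j) (hCc j) (fun w hw => (hW w (hCW j hw)).2) (fun w hw w' hw' => ?_) ?_ hf
    · have h1 := Metric.mem_ball.1 (hCW j hw).1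
      have h2 := Metric.mem_ball.1 (hCW j hw').1
      have := dist_triangle_right w w' c
      rw [Real.coe_toNNReal']
      exact le_max_of_le_left (by linarith)
    · rw [← hV']; exact measure_mono (hkC j)
  have hU : (k '' W) ×ˢ (k '' W) = ⋃ j, (k '' C j) ×ˢ (k '' C j) := by
    rw [hCU, image_iUnion]
    refine (iUnion_prod_of_monotone ?_ ?_).symm <;> exact fun i j hij => image_mono (hCm hij)
  have hdir : Monotone (fun j => (k '' C j) ×ˢ (k '' C j)) := fun i j hij =>
    prod_mono (image_mono (hCm hij)) (image_mono (hCm hij))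
  rw [hU, setLIntegral_iUnion_of_directed _ hdir.directed_le]
  exact iSup_le hj

lemma local_good {n : ℕ} {Ω : Set (EVec n)} (hΩ : IsLipschitzDomain Ω) (hvol : volume Ω < ∞)
    {x : EVec n} (hx : x ∈ closure Ω) : ∃ V : Set (EVec n), IsOpen V ∧ x ∈ V ∧ GoodSet Ω (V ∩ Ω) := by
  obtain ⟨ho, -, -, hf⟩ := hΩ
  by_cases hxΩ : x ∈ Ω
  · obtain ⟨r, hr, hball⟩ := Metric.isOpen_iff.1 ho x hxΩ
    refine ⟨Metric.ball x r, Metric.isOpen_ball, Metric.mem_ball_self hr, ?_⟩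
    have := chart_good ho hvol (LipschitzWith.id) (LipschitzWith.id) x 0 r (-1)
      (fun w hw => ⟨hball hw.1, rfl⟩)
    rw [image_id] at this
    convert this using 1
    ext y
    constructor
    · rintro ⟨h1, h2⟩; exact ⟨h1, by simp⟩
    · rintro ⟨h1, h2⟩; exact ⟨h1, hball h1⟩
  · have hxf : x ∈ frontier Ω := by
      rw [frontier, ho.interior_eq]; exact ⟨hx, hxΩ⟩
    obtain ⟨U, h, hinv, K, e, -, hU, hxU, hhl, hkl, hkh, him⟩ := hf x hxf
    obtain ⟨h', hh', heq⟩ := hhl.extend_finite_dimension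
    obtain ⟨k', hk', keq⟩ := hkl.extend_finite_dimension
    generalize lipschitzExtensionConstant (EVec n) * K = K' at hh' hk'
    have hk'h : ∀ y ∈ U, k' (h y) = y := fun y hy => by
      rw [← keq (mem_image_of_mem h hy), hkh y hy]
    have hk'h' : ∀ y ∈ U, k' (h' y) = y := fun y hy => by
      rw [← heq hy, hk'h y hy]
    have hnb := inv_dom hh' hk' (hU.mem_nhds hxU) hk'h'
    obtain ⟨r, hr, hball⟩ := Metric.mem_nhds_iff.1 hnb
    have himg : h' '' U = h '' U := (image_congr fun y hy => heq hy).symm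
    rw [himg] at hball
    have hW : ∀ w ∈ Metric.ball (h' x) r ∩ {y | 0 < ⟪e, y⟫}, ∃ y ∈ U ∩ Ω, h y = w := by
      rintro w ⟨h1, h2⟩
      have : w ∈ h '' (U ∩ Ω) := by rw [him]; exact ⟨hball h1, h2⟩
      exact this
    have hW2 : ∀ w ∈ Metric.ball (h' x) r ∩ {y | 0 < ⟪e, y⟫}, k' w ∈ Ω ∧ h' (k' w) = w := by
      intro w hw
      obtain ⟨y, hy, hyw⟩ := hW w hw
      have h1 : k' w = y := by rw [← hyw]; exact hk'h y hy.1
      rw [h1, ← hyw]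
      exact ⟨hy.2, (heq hy.1).symm⟩
    have hg := chart_good ho hvol hh' hk' (h' x) e r 0 hW2
    have hxb : x ∈ h' ⁻¹' Metric.ball (h' x) r := mem_preimage.2 (Metric.mem_ball_self hr)
    refine ⟨U ∩ h' ⁻¹' Metric.ball (h' x) r, hU.inter (Metric.isOpen_ball.preimage hh'.continuous),
      ⟨hxU, hxb⟩, ?_⟩
    convert hg using 1
    ext y
    constructor
    · rintro ⟨⟨h1, h2⟩, h3⟩
      refine ⟨h y, ⟨?_, ?_⟩, hk'h y h1⟩
      · rw [heq h1]; exact h2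
      · have : h y ∈ h '' (U ∩ Ω) := ⟨y, ⟨h1, h3⟩, rfl⟩
        rw [him] at this; exact this.2
    · rintro ⟨w, hw, rfl⟩
      obtain ⟨y, hy, rfl⟩ := hW w hw
      rw [hk'h y hy.1]
      refine ⟨⟨hy.1, ?_⟩, hy.2⟩
      have := hw.1
      rwa [heq hy.1] at this

noncomputable def Iu {n : ℕ} (u : EVec n → ℝ) (S T : Set (EVec n)) : ℝ≥0∞ :=
  ∫⁻ x in S, ∫⁻ y in T, ‖u x - u y‖ₑ

lemma Iu_eq {n : ℕ} {u : EVec n → ℝ} (hu : Measurable u) (S T : Set (EVec n)) :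
    ∫⁻ p in S ×ˢ T, ‖u p.1 - u p.2‖ₑ ∂((volume : Measure (EVec n)).prod volume) = Iu u S T := by
  rw [← Measure.prod_restrict, lintegral_prod _ (by fun_prop)]; rfl

lemma Iu_symm {n : ℕ} {u : EVec n → ℝ} (hu : Measurable u) (S T : Set (EVec n)) : Iu u S T = Iu u T S := by
  rw [Iu, lintegral_lintegral_swap (by fun_prop), Iu]
  refine lintegral_congr fun y => lintegral_congr fun x => ?_
  rw [← enorm_neg]; congr 1; ring

lemma Iu_mono {n : ℕ} (u : EVec n → ℝ) {S T S' T' : Set (EVec n)} (h : S ⊆ S') (h' : T ⊆ T') :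
    Iu u S T ≤ Iu u S' T' :=
  (lintegral_mono_set h).trans (lintegral_mono fun _ => lintegral_mono_set h')

lemma Iu_tri {n : ℕ} {u : EVec n → ℝ} (hu : Measurable u) (S T Z : Set (EVec n)) :
    volume Z * Iu u S T ≤ volume T * Iu u S Z + volume S * Iu u Z T := by
  have hm : Measurable (fun y => ∫⁻ z in Z, ‖u z - u y‖ₑ) := 
    Measurable.lintegral_prod_left' (f := fun p : EVec n × EVec n => ‖u p.1 - u p.2‖ₑ) (by fun_prop)
  have hm2 : Measurable (fun y => ∫⁻ z in Z, ‖u y - u z‖ₑ) := 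
    Measurable.lintegral_prod_right' (f := fun p : EVec n × EVec n => ‖u p.1 - u p.2‖ₑ) (by fun_prop)
  have hm3 : Measurable (fun y => ∫⁻ z in T, ‖u y - u z‖ₑ) := 
    Measurable.lintegral_prod_right' (f := fun p : EVec n × EVec n => ‖u p.1 - u p.2‖ₑ) (by fun_prop)
  have e1 : volume Z * Iu u S T = ∫⁻ x in S, ∫⁻ y in T, ∫⁻ z in Z, ‖u x - u y‖ₑ := by
    simp_rw [setLIntegral_const]
    rw [Iu, ← lintegral_const_mul _ hm3]
    refine lintegral_congr fun x => ?_
    rw [lintegral_mul_const _ (by fun_prop), mul_comm]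
  rw [e1]
  calc _ ≤ ∫⁻ x in S, ∫⁻ y in T, ((∫⁻ z in Z, ‖u x - u z‖ₑ) + ∫⁻ z in Z, ‖u z - u y‖ₑ) := by
        refine lintegral_mono fun x => lintegral_mono fun y => ?_
        rw [← lintegral_add_left (by fun_prop)]
        refine lintegral_mono fun z => ?_
        have : u x - u y = (u x - u z) + (u z - u y) := by ring
        rw [this]; exact enorm_add_le _ _
    _ = ∫⁻ x in S, ((volume T * ∫⁻ z in Z, ‖u x - u z‖ₑ) + Iu u T Z) := by
        refine lintegral_congr fun x => ?_
        rw [lintegral_add_left measurable_const, setLIntegral_const, mul_comm, Iu_symm hu, Iu, lintegral_lintegral_swap (by fun_prop)]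
    _ = _ := by
        rw [lintegral_add_right _ measurable_const, setLIntegral_const, lintegral_const_mul _ hm2, Iu_symm hu T Z, mul_comm (Iu u Z T)]
        rfl

lemma glue {n : ℕ} {Ω A B : Set (EVec n)} (hA : GoodSet Ω A) (hB : GoodSet Ω B)
    (hAf : volume A < ∞) (hBf : volume B < ∞) (h0 : volume (A ∩ B) ≠ 0) : GoodSet Ω (A ∪ B) := by
  obtain ⟨c, hc⟩ := hA
  obtain ⟨d, hd⟩ := hB
  set m := volume (A ∩ B) with hm
  have hmf : m ≠ ∞ := ((measure_mono inter_subset_left).trans_lt hAf).ne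
  have hE : m⁻¹ * (volume B * c + volume A * d) ≠ ∞ :=
    ENNReal.mul_ne_top (ENNReal.inv_ne_top.2 h0) (ENNReal.add_ne_top.2
      ⟨ENNReal.mul_ne_top hBf.ne ENNReal.coe_ne_top, ENNReal.mul_ne_top hAf.ne ENNReal.coe_ne_top⟩)
  set q := (m⁻¹ * (volume B * c + volume A * d)).toNNReal with hq
  have hq' : m⁻¹ * (volume B * c + volume A * d) = q := (ENNReal.coe_toNNReal hE).symm
  refine ⟨(c + q) + (q + d), fun u g hug => ?_⟩
  have hu := hug.1
  have h1 := hc u g hug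
  have h2 := hd u g hug
  rw [Iu_eq hu] at h1 h2 ⊢
  set G := ∑ i, ∫⁻ x, ‖g i x‖ₑ
  have h3 : Iu u A B ≤ q * G := by
    have := Iu_tri hu A B (A ∩ B)
    rw [← hq', mul_assoc, ← ENNReal.mul_le_iff_le_inv h0 hmf]
    refine this.trans ?_
    rw [add_mul, mul_assoc, mul_assoc]
    gcongr
    · exact (Iu_mono u subset_rfl inter_subset_left).trans h1
    · exact (Iu_mono u inter_subset_right subset_rfl).trans h2
  calc Iu u (A ∪ B) (A ∪ B) ≤ Iu u A (A ∪ B) + Iu u B (A ∪ B) := lintegral_union_le _ _ _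
    _ ≤ (Iu u A A + Iu u A B) + (Iu u B A + Iu u B B) := by
      have : ∀ S, Iu u S (A ∪ B) ≤ Iu u S A + Iu u S B := fun S => by
        rw [Iu_symm hu S, Iu_symm hu S, Iu_symm hu S]
        exact lintegral_union_le _ _ _
      exact add_le_add (this A) (this B)
    _ ≤ (c * G + q * G) + (q * G + d * G) := by
      rw [Iu_symm hu B A]; gcongr
    _ = _ := by push_cast; ring

lemma domain_good {n : ℕ} {Ω : Set (EVec n)} (hΩ : IsLipschitzDomain Ω) (hb : Bornology.IsBounded Ω) :
    GoodSet Ω Ω := by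
  have hvol : volume Ω < ∞ := hb.measure_lt_top
  have ho := hΩ.1
  choose! V hVo hxV hVg using fun x (hx : x ∈ closure Ω) => local_good hΩ hvol hx
  obtain ⟨t, ht, hcov⟩ := hb.isCompact_closure.elim_nhds_subcover V fun x hx => (hVo x hx).mem_nhds (hxV x hx)
  classical
  set P := t.powerset.filter (fun s => s.Nonempty ∧ GoodSet Ω ((⋃ x ∈ s, V x) ∩ Ω)) with hP
  obtain ⟨x0, hx0⟩ := hΩ.2.1
  have hPne : P.Nonempty := by
    obtain ⟨i, hi, -⟩ := mem_iUnion₂.1 (hcov (subset_closure hx0))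
    refine ⟨{i}, ?_⟩
    simp only [hP, Finset.mem_filter, Finset.mem_powerset, Finset.singleton_subset_iff]
    refine ⟨hi, by simp, ?_⟩
    simpa using hVg i (ht i hi)
  obtain ⟨s, hs, hmax⟩ := P.exists_max_image Finset.card hPne
  simp only [hP, Finset.mem_filter, Finset.mem_powerset] at hs
  obtain ⟨hst, ⟨i0, hi0⟩, hsg⟩ := hs
  have hne : ∀ i ∈ t, (Ω ∩ V i).Nonempty := fun i hi => by
    rw [inter_comm]
    exact mem_closure_iff.1 (ht i hi) _ (hVo i (ht i hi)) (hxV i (ht i hi))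
  set A := ⋃ x ∈ s, V x with hA
  set B := ⋃ x ∈ t \ s, V x with hB
  have hAo : IsOpen A := isOpen_biUnion fun i hi => hVo i (ht i (hst hi))
  have hBo : IsOpen B := isOpen_biUnion fun i hi => hVo i (ht i (Finset.mem_sdiff.1 hi).1)
  have hcovAB : Ω ⊆ A ∪ B := by
    intro y hy
    obtain ⟨i, hi, hyi⟩ := mem_iUnion₂.1 (hcov (subset_closure hy))
    by_cases his : i ∈ s
    · exact Or.inl (mem_iUnion₂.2 ⟨i, his, hyi⟩)
    · exact Or.inr (mem_iUnion₂.2 ⟨i, Finset.mem_sdiff.2 ⟨hi, his⟩, hyi⟩)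
  have hAne : (Ω ∩ A).Nonempty := by
    obtain ⟨y, hy1, hy2⟩ := hne i0 (hst hi0)
    exact ⟨y, hy1, mem_iUnion₂.2 ⟨i0, hi0, hy2⟩⟩
  by_cases hBne : (Ω ∩ B).Nonempty
  · exfalso
    obtain ⟨y, hy, hyA, hyB⟩ := hΩ.2.2.1.isPreconnected A B hAo hBo hcovAB hAne hBne
    obtain ⟨i, hi, hyi⟩ := mem_iUnion₂.1 hyB
    rw [Finset.mem_sdiff] at hi
    have hgl := glue hsg (hVg i (ht i hi.1)) ((measure_mono inter_subset_right).trans_lt hvol)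
      ((measure_mono inter_subset_right).trans_lt hvol)
      (((hAo.inter ho).inter ((hVo i (ht i hi.1)).inter ho)).measure_pos volume ⟨y, ⟨hyA, hy⟩, hyi, hy⟩).ne'
    have hin : insert i s ∈ P := by
      simp only [hP, Finset.mem_filter, Finset.mem_powerset]
      refine ⟨Finset.insert_subset hi.1 hst, by simp, ?_⟩
      rw [Finset.set_biUnion_insert, union_comm, union_inter_distrib_right]
      exact hgl
    have := hmax _ hin
    rw [Finset.card_insert_of_notMem hi.2] at this
    omega
  · have : A ∩ Ω = Ω := by
      refine inter_eq_right.2 fun y hy => (hcovAB hy).resolve_right fun h => hBne ⟨y, hy, h⟩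
    rwa [this] at hsg

lemma sw_poincare {n : ℕ} {Ω : Set (EVec n)} (hΩ : IsLipschitzDomain Ω) (hb : Bornology.IsBounded Ω) :
    ∃ C : NNReal, ∀ u g, SW Ω u g → ∫ x in Ω, u x = 0 → ∫⁻ x in Ω, ‖u x‖ₑ ≤ C * ∑ i, ∫⁻ x, ‖g i x‖ₑ := by
  have hvol : volume Ω < ∞ := hb.measure_lt_top
  obtain ⟨c, hc⟩ := domain_good hΩ hb
  have h0 : volume Ω ≠ 0 := (hΩ.1.measure_pos volume hΩ.2.1).ne'
  refine ⟨((volume Ω)⁻¹).toNNReal * c, fun u g hug hz => ?_⟩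
  have h1 := hc u g hug
  rw [Iu_eq hug.1] at h1
  rw [ENNReal.coe_mul, ENNReal.coe_toNNReal (ENNReal.inv_ne_top.2 h0), mul_assoc,
    ← ENNReal.mul_le_iff_le_inv h0 hvol.ne]
  refine le_trans ?_ h1
  have hu := hug.1
  rw [← lintegral_const_mul _ (by fun_prop)]
  refine lintegral_mono fun x => ?_
  have hui : IntegrableOn u Ω := hug.2.1.integrableOn
  have hci : IntegrableOn (fun _ => u x) Ω := integrableOn_const hvol.ne
  have e : ∫ y in Ω, (u x - u y) = (volume Ω).toReal * u x := by
    rw [integral_sub hci hui, hz]; simp [Measure.real]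
  have := enorm_integral_le_lintegral_enorm (μ := volume.restrict Ω) (fun y => u x - u y)
  rw [e, enorm_mul] at this
  convert this using 2
  rw [Real.enorm_of_nonneg ENNReal.toReal_nonneg, ENNReal.ofReal_toReal hvol.ne]

noncomputable def mE {N n : ℕ} (z : Fin N → Fin n → ℝ) : EuclideanSpace ℝ (Fin N × Fin n) :=
  WithLp.toLp 2 (fun p => z p.1 p.2)

lemma mE_inner {N n : ℕ} (A B : Fin N → Fin n → ℝ) : ⟪mE A, mE B⟫ = mdot A B := by
  simp only [mE, mdot, PiLp.inner_apply, Fintype.sum_prod_type]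
  refine Finset.sum_congr rfl fun a _ => Finset.sum_congr rfl fun i _ => ?_
  simp [mul_comm]

lemma mE_norm {N n : ℕ} (A : Fin N → Fin n → ℝ) : ‖mE A‖ = mnorm A := by
  rw [mnorm, ← mE_inner, norm_eq_sqrt_real_inner]

lemma mE_add {N n : ℕ} (A B : Fin N → Fin n → ℝ) : mE (A + B) = mE A + mE B := rfl
lemma mE_sub {N n : ℕ} (A B : Fin N → Fin n → ℝ) : mE (A - B) = mE A - mE B := rfl
lemma mE_smul {N n : ℕ} (t : ℝ) (A : Fin N → Fin n → ℝ) : mE (t • A) = t • mE A := rfl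

lemma mnorm_add {N n : ℕ} (A B : Fin N → Fin n → ℝ) : mnorm (A + B) ≤ mnorm A + mnorm B := by
  simp only [← mE_norm, mE_add]; exact norm_add_le _ _
lemma mnorm_smul {N n : ℕ} (t : ℝ) (A : Fin N → Fin n → ℝ) : mnorm (t • A) = |t| * mnorm A := by
  simp only [← mE_norm, mE_smul, norm_smul, Real.norm_eq_abs]
lemma mnorm_nn {N n : ℕ} (A : Fin N → Fin n → ℝ) : 0 ≤ mnorm A := Real.sqrt_nonneg _
lemma mdot_cs {N n : ℕ} (A B : Fin N → Fin n → ℝ) : |mdot A B| ≤ mnorm A * mnorm B := by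
  simp only [← mE_norm, ← mE_inner]; exact abs_real_inner_le_norm _ _
lemma mdot_sub {N n : ℕ} (A B C : Fin N → Fin n → ℝ) : mdot A (B - C) = mdot A B - mdot A C := by
  simp only [← mE_inner, mE_sub, inner_sub_right]
lemma mdot_smul {N n : ℕ} (t : ℝ) (A B : Fin N → Fin n → ℝ) : mdot A (t • B) = t * mdot A B := by
  simp only [← mE_inner, mE_smul, inner_smul_right]
lemma mnorm_cont {N n : ℕ} : Continuous (mnorm : (Fin N → Fin n → ℝ) → ℝ) := by
  unfold mnorm mdot; fun_prop
lemma entry_le {N n : ℕ} (A : Fin N → Fin n → ℝ) (a : Fin N) (i : Fin n) : |A a i| ≤ mnorm A := by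
  rw [← mE_norm]
  exact PiLp.norm_apply_le (mE A) (a, i)

lemma mnorm_le_sum {N n : ℕ} (A : Fin N → Fin n → ℝ) : mnorm A ≤ ∑ a, ∑ i, |A a i| := by
  have h0 : 0 ≤ ∑ a, ∑ i, |A a i| := Finset.sum_nonneg fun _ _ => Finset.sum_nonneg fun _ _ => abs_nonneg _
  rw [mnorm, Real.sqrt_le_left h0, sq, mdot, Finset.sum_mul]
  refine Finset.sum_le_sum fun a _ => ?_
  rw [Finset.sum_mul]
  refine Finset.sum_le_sum fun i _ => ?_
  rw [← abs_mul_abs_self]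
  gcongr
  refine (Finset.single_le_sum (f := fun i => |A a i|) (fun _ _ => abs_nonneg _) (Finset.mem_univ i)).trans
    (Finset.single_le_sum (f := fun a => ∑ i, |A a i|) (fun _ _ => Finset.sum_nonneg fun _ _ => abs_nonneg _) (Finset.mem_univ a))

lemma vnorm_le_sum {N : ℕ} (v : Fin N → ℝ) : vnorm v ≤ ∑ a, |v a| := by
  have h0 : 0 ≤ ∑ a, |v a| := Finset.sum_nonneg fun _ _ => abs_nonneg _
  rw [vnorm, Real.sqrt_le_left h0, sq (∑ a, |v a|), Finset.sum_mul]
  refine Finset.sum_le_sum fun a _ => ?_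
  rw [sq, ← abs_mul_abs_self]
  gcongr
  exact Finset.single_le_sum (f := fun a => |v a|) (fun _ _ => abs_nonneg _) (Finset.mem_univ a)

lemma F_lip {N n : ℕ} {F : (Fin N → Fin n → ℝ) → ℝ} {L : ℝ} (hL : 0 < L) (hFpos : ∀ z, 0 ≤ F z)
    (hFconv : ConvexOn ℝ Set.univ F) (hF : ∀ z, F z ≤ L * (1 + mnorm z)) (x y : Fin N → Fin n → ℝ) :
    F y - F x ≤ L * mnorm (y - x) := by
  have key : ∀ t : ℝ, 0 < t → t < 1 → F y - F x ≤ t * (L * (1 + mnorm x)) + L * mnorm (y - x) := by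
    intro t h0 h1
    have h2 := hFconv.2 (mem_univ x) (mem_univ (x + t⁻¹ • (y - x))) (show 0 ≤ 1 - t by linarith) h0.le (by ring)
    have e : (1 - t) • x + t • (x + t⁻¹ • (y - x)) = y := by
      rw [smul_add, smul_smul, mul_inv_cancel₀ h0.ne']; module
    rw [e, smul_eq_mul, smul_eq_mul] at h2
    have h3 := hF (x + t⁻¹ • (y - x))
    have h4 := mnorm_add x (t⁻¹ • (y - x))
    rw [mnorm_smul, abs_of_pos (by positivity)] at h4
    have h5 : t * F (x + t⁻¹ • (y - x)) ≤ t * (L * (1 + (mnorm x + t⁻¹ * mnorm (y - x)))) := by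
      gcongr; refine h3.trans ?_; gcongr
    have h6 : t * (L * (1 + (mnorm x + t⁻¹ * mnorm (y - x)))) = t * (L * (1 + mnorm x)) + L * mnorm (y - x) := by
      field_simp; ring
    have := mul_nonneg h0.le (hFpos x)
    linarith
  have hlim : Tendsto (fun t : ℝ => t * (L * (1 + mnorm x)) + L * mnorm (y - x)) (𝓝[>] 0) (𝓝 (0 * (L * (1 + mnorm x)) + L * mnorm (y - x))) :=
    ((continuous_id.mul continuous_const).add continuous_const).continuousAt.tendsto.mono_left nhdsWithin_le_nhds
  rw [zero_mul, zero_add] at hlim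
  refine ge_of_tendsto hlim ?_
  filter_upwards [Ioo_mem_nhdsGT (zero_lt_one' ℝ)] with t ht
  exact key t ht.1 ht.2

lemma sphere_compact {N n : ℕ} : IsCompact {ξ : Fin N → Fin n → ℝ | mnorm ξ = 1} := by
  refine Metric.isCompact_of_isClosed_isBounded (isClosed_eq mnorm_cont continuous_const) ?_
  refine (Metric.isBounded_closedBall (x := (0 : Fin N → Fin n → ℝ)) (r := 1)).subset fun ξ hξ => ?_
  rw [mem_closedBall_zero_iff]
  refine (pi_norm_le_iff_of_nonneg zero_le_one).2 fun a => (pi_norm_le_iff_of_nonneg zero_le_one).2 fun i => ?_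
  have h : mnorm ξ = 1 := hξ
  rw [← h]; exact entry_le ξ a i

lemma pointwise {N n : ℕ} {F : (Fin N → Fin n → ℝ) → ℝ} {L : ℝ} (hL : 0 < L) (hFpos : ∀ z, 0 ≤ F z)
    (hFconv : ConvexOn ℝ Set.univ F) (hF : ∀ z, F z ≤ L * (1 + mnorm z)) {Finf : (Fin N → Fin n → ℝ) → ℝ}
    (hFinf : ∀ z, Filter.Tendsto (fun t : ℝ => t * F (t⁻¹ • z))
      (nhdsWithin 0 (Set.Ioi 0)) (nhds (Finf z))) {M δ₀ : ℝ} (hM : 0 ≤ M) (hδ : 0 < δ₀) :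
    ∃ δ > 0, ∃ C > 0, ∀ T : Fin N → Fin n → ℝ, mnorm T ≤ M →
      (∀ ξ, mnorm ξ = 1 → δ₀ ≤ Finf ξ - mdot T ξ) → ∀ z, δ * mnorm z - C ≤ F z - mdot T z := by
  obtain ⟨η, hη, hηe⟩ : ∃ η > 0, (1 + L + M) * η = δ₀ / 2 :=
    ⟨δ₀ / 2 / (1 + L + M), by positivity, by field_simp⟩
  obtain ⟨net, hnet, hcov⟩ := (sphere_compact (N := N) (n := n)).elim_nhds_subcover (fun ξ => {ζ | mnorm (ζ - ξ) < η})
    (fun ξ _ => by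
      refine (isOpen_lt (mnorm_cont.comp (by fun_prop)) continuous_const).mem_nhds ?_
      show mnorm (ξ - ξ) < η
      rw [sub_self, ← zero_smul ℝ (0 : Fin N → Fin n → ℝ), mnorm_smul]; simpa using hη)
  have hev : ∀ᶠ t in 𝓝[>] (0:ℝ), ∀ ξ ∈ net, Finf ξ - η < t * F (t⁻¹ • ξ) := by
    rw [Filter.eventually_all_finset]
    exact fun ξ _ => (hFinf ξ).eventually_const_lt (by linarith)
  obtain ⟨ε, hε, hεs⟩ := mem_nhdsGT_iff_exists_Ioo_subset.1 hev
  have hε : 0 < ε := hε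
  refine ⟨δ₀ / 2, by positivity, δ₀ / 2 * ε⁻¹ + M * ε⁻¹, by positivity, fun T hT hξ z => ?_⟩
  have hcs := (abs_le.1 (mdot_cs T z)).2
  have hnn := mnorm_nn z
  rcases le_or_gt (mnorm z) ε⁻¹ with hz | hz
  · have h1 : mnorm T * mnorm z ≤ M * ε⁻¹ := by gcongr
    have h2 : δ₀ / 2 * mnorm z ≤ δ₀ / 2 * ε⁻¹ := by gcongr
    linarith [hFpos z]
  · have hz0 : 0 < mnorm z := (inv_pos.2 hε).trans hz
    set s := mnorm z with hs
    have htm : s⁻¹ ∈ Ioo 0 ε := ⟨inv_pos.2 hz0, inv_lt_of_inv_lt₀ hε hz⟩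
    have ht := hεs htm
    have hζ1 : mnorm (s⁻¹ • z) = 1 := by
      rw [mnorm_smul, abs_of_pos (inv_pos.2 hz0), ← hs, inv_mul_cancel₀ hz0.ne']
    obtain ⟨ξ, hξn, hζξ⟩ := mem_iUnion₂.1 (hcov hζ1)
    have hζξ : mnorm (s⁻¹ • z - ξ) < η := hζξ
    have h1 := ht ξ hξn
    rw [inv_inv] at h1
    have hzs : z = s • (s⁻¹ • z) := by rw [smul_smul, mul_inv_cancel₀ hz0.ne', one_smul]
    have hsub : ∀ A B : Fin N → Fin n → ℝ, mnorm (A - B) = mnorm (B - A) := fun A B => by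
      simp only [← mE_norm, mE_sub]; exact norm_sub_rev _ _
    have h2 := F_lip hL hFpos hFconv hF z (s • ξ)
    have h3 : mnorm (s • ξ - z) = s * mnorm (s⁻¹ • z - ξ) := by
      rw [hsub]; nth_rw 1 [hzs]; rw [← smul_sub, mnorm_smul, abs_of_pos hz0]
    rw [h3] at h2
    have h4 := hξ ξ (hnet ξ hξn)
    have h5 := (abs_le.1 (mdot_cs T (s⁻¹ • z - ξ))).2
    rw [mdot_sub, mdot_smul] at h5
    have h6 : mnorm T * mnorm (s⁻¹ • z - ξ) ≤ M * η := by gcongr; exact mnorm_nn _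
    have h7 : L * (s * mnorm (s⁻¹ • z - ξ)) ≤ L * (s * η) := by gcongr
    have h8 : Finf ξ - η < s⁻¹ * F (s • ξ) := h1
    have h9 : s * (Finf ξ - η) < F (s • ξ) := by
      rwa [← div_eq_inv_mul, lt_div_iff₀' hz0] at h8
    have h10 : mdot T z ≤ s * (mdot T ξ + M * η) := by
      have : s⁻¹ * mdot T z ≤ mdot T ξ + M * η := by linarith
      rwa [← div_eq_inv_mul, div_le_iff₀' hz0] at this
    have h11 : s * δ₀ ≤ s * (Finf ξ - mdot T ξ) := by gcongr
    have h12 : s * ((1 + L + M) * η) = s * (δ₀ / 2) := by rw [hηe]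
    have : 0 < δ₀ / 2 * ε⁻¹ + M * ε⁻¹ := by positivity
    nlinarith

lemma rep_fun {n : ℕ} {Ω : Set (EVec n)} (hΩ : MeasurableSet Ω) {f : EVec n → ℝ} (hf : IntegrableOn f Ω) :
    ∃ f' : EVec n → ℝ, Measurable f' ∧ Integrable f' ∧ (∀ᵐ x ∂(volume.restrict Ω), f' x = f x) ∧
      ∀ x, x ∉ Ω → f' x = 0 := by
  refine ⟨Ω.indicator (hf.1.mk f), hf.1.stronglyMeasurable_mk.measurable.indicator hΩ, ?_, ?_, ?_⟩
  · rw [integrable_indicator_iff hΩ]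
    exact Integrable.congr hf hf.1.ae_eq_mk
  · filter_upwards [hf.1.ae_eq_mk, ae_restrict_mem hΩ] with x h1 h2
    rw [indicator_of_mem h2, h1]
  · intro x hx; exact indicator_of_notMem hx _

lemma rep_integral {n : ℕ} {Ω : Set (EVec n)} {f f' : EVec n → ℝ}
    (h : ∀ᵐ x ∂(volume.restrict Ω), f' x = f x) (h0 : ∀ x, x ∉ Ω → f' x = 0) (ψ : EVec n → ℝ) :
    ∫ x, f' x * ψ x = ∫ x in Ω, f x * ψ x := by
  rw [← setIntegral_eq_integral_of_forall_compl_eq_zero (s := Ω) (fun x hx => by rw [h0 x hx, zero_mul])]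
  refine integral_congr_ae ?_
  filter_upwards [h] with x hx
  rw [hx]

lemma rep_lintegral {n : ℕ} {Ω : Set (EVec n)} (hΩ : MeasurableSet Ω) {f f' : EVec n → ℝ}
    (h : ∀ᵐ x ∂(volume.restrict Ω), f' x = f x) (h0 : ∀ x, x ∉ Ω → f' x = 0) :
    ∫⁻ x, ‖f' x‖ₑ = ∫⁻ x in Ω, ‖f x‖ₑ := by
  have : ∫⁻ x, ‖f' x‖ₑ = ∫⁻ x in Ω, ‖f' x‖ₑ := by
    rw [← lintegral_indicator hΩ]
    refine lintegral_congr fun x => ?_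
    by_cases hx : x ∈ Ω
    · rw [indicator_of_mem hx]
    · rw [indicator_of_notMem hx, h0 x hx, enorm_zero]
  rw [this]
  refine lintegral_congr_ae ?_
  filter_upwards [h] with x hx
  rw [hx]

lemma mnorm_int {N n : ℕ} {Ω : Set (EVec n)} {Dw : EVec n → Fin N → Fin n → ℝ} (h : IntegrableOn Dw Ω) :
    IntegrableOn (fun x => mnorm (Dw x)) Ω := by
  have hs : IntegrableOn (fun x => ∑ a, ∑ i, |Dw x a i|) Ω := by
    refine integrable_finsetSum _ fun a _ => integrable_finsetSum _ fun i _ => ?_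
    exact ((h.eval a).eval i).abs
  refine Integrable.mono' hs (mnorm_cont.comp_aestronglyMeasurable h.1) (ae_of_all _ fun x => ?_)
  rw [Real.norm_of_nonneg (mnorm_nn _)]
  exact mnorm_le_sum _

lemma poincare_vec {N n : ℕ} {Ω : Set (EVec n)} (hΩ : IsLipschitzDomain Ω) (hb : Bornology.IsBounded Ω) :
    ∃ C : ℝ, 0 ≤ C ∧ ∀ (w : EVec n → Fin N → ℝ) (Dw : EVec n → Fin N → Fin n → ℝ),
      HasWeakDerivOn Ω w Dw → ZeroMean Ω w → ∫ x in Ω, vnorm (w x) ≤ C * ∫ x in Ω, mnorm (Dw x) := by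
  obtain ⟨c, hc⟩ := sw_poincare hΩ hb
  have hm := hΩ.1.measurableSet
  refine ⟨N * (c * n), by positivity, fun w Dw hw hz => ?_⟩
  obtain ⟨h1, h2, h3⟩ := hw
  have hmi := mnorm_int h2
  have hwa : ∀ a, IntegrableOn (fun x => w x a) Ω := fun a => Integrable.eval h1 a
  have hDa : ∀ a i, IntegrableOn (fun x => Dw x a i) Ω := fun a i => (Integrable.eval h2 a).eval i
  have hcomp : ∀ a, ∫ x in Ω, |w x a| ≤ (c * n) * ∫ x in Ω, mnorm (Dw x) := by
    intro a
    obtain ⟨u, hu1, hu2, hu3, hu4⟩ := rep_fun hm (hwa a)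
    choose g hg1 hg2 hg3 hg4 using fun i => rep_fun hm (hDa a i)
    have hSW : SW Ω u g := by
      refine ⟨hu1, hu2, hg1, hg2, fun φ hφ hφc hφs i => ?_⟩
      rw [rep_integral hu3 hu4, rep_integral (hg3 i) (hg4 i)]
      exact h3 φ hφ hφc hφs a i
    have hzero : ∫ x in Ω, u x = 0 := by
      rw [← hz a]; exact integral_congr_ae hu3
    have key := hc u g hSW hzero
    have e1 : ∫⁻ x in Ω, ‖u x‖ₑ = ENNReal.ofReal (∫ x in Ω, |w x a|) := by
      have := ofReal_integral_norm_eq_lintegral_enorm (hwa a)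
      simp only [Real.norm_eq_abs] at this
      rw [this]
      refine lintegral_congr_ae ?_
      filter_upwards [hu3] with x hx
      rw [hx]
    have e2 : ∀ i, ∫⁻ x, ‖g i x‖ₑ ≤ ENNReal.ofReal (∫ x in Ω, mnorm (Dw x)) := by
      intro i
      rw [rep_lintegral hm (hg3 i) (hg4 i), ← ofReal_integral_norm_eq_lintegral_enorm (hDa a i)]
      refine ENNReal.ofReal_le_ofReal (integral_mono (hDa a i).norm hmi fun x => entry_le _ a i)
    have hI : 0 ≤ ∫ x in Ω, mnorm (Dw x) := integral_nonneg fun x => mnorm_nn _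
    rw [e1] at key
    have key2 : ENNReal.ofReal (∫ x in Ω, |w x a|) ≤ ENNReal.ofReal ((c * n) * ∫ x in Ω, mnorm (Dw x)) := by
      refine key.trans ?_
      rw [ENNReal.ofReal_mul (by positivity), ENNReal.ofReal_mul (by positivity), ENNReal.ofReal_coe_nnreal,
        ENNReal.ofReal_natCast, mul_assoc]
      gcongr
      refine (Finset.sum_le_sum fun i _ => e2 i).trans_eq ?_
      simp
    exact (ENNReal.ofReal_le_ofReal_iff (by positivity)).1 key2
  have hvi : IntegrableOn (fun x => ∑ a, |w x a|) Ω := integrable_finsetSum _ fun a _ => (hwa a).abs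
  calc ∫ x in Ω, vnorm (w x) ≤ ∫ x in Ω, ∑ a, |w x a| := 
        integral_mono_of_nonneg (ae_of_all _ fun x => Real.sqrt_nonneg _) hvi (ae_of_all _ fun x => vnorm_le_sum _)
    _ = ∑ a, ∫ x in Ω, |w x a| := integral_finsetSum _ fun a _ => (hwa a).abs
    _ ≤ ∑ a : Fin N, (c * n) * ∫ x in Ω, mnorm (Dw x) := Finset.sum_le_sum fun a _ => hcomp a
    _ = _ := by simp; ring

lemma energy_lower {N n : ℕ} {Ω : Set (EVec n)} (hvol : volume Ω < ∞) {F : (Fin N → Fin n → ℝ) → ℝ} {L δ C M : ℝ}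
    (hFpos : ∀ z, 0 ≤ F z) (hFc : Continuous F) (hF2 : ∀ z, F z ≤ L * (1 + mnorm z))
    {T₀ : EVec n → Fin N → Fin n → ℝ} (hTmeas : AEStronglyMeasurable T₀ (volume.restrict Ω))
    (hM : ∀ᵐ x ∂(volume.restrict Ω), mnorm (T₀ x) ≤ M)
    (hpw : ∀ᵐ x ∂(volume.restrict Ω), ∀ z, δ * mnorm z - C ≤ F z - mdot (T₀ x) z)
    {Dw : EVec n → Fin N → Fin n → ℝ} (hD : IntegrableOn Dw Ω) :
    δ * (∫ x in Ω, mnorm (Dw x)) - C * (volume Ω).toReal ≤ FFgen Ω F T₀ Dw := by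
  have hmi := mnorm_int hD
  have hci : ∀ c : ℝ, IntegrableOn (fun _ => c) Ω := fun c => integrableOn_const hvol.ne
  have hFi : IntegrableOn (fun x => F (Dw x)) Ω := by
    have hg : IntegrableOn (fun x => L * (1 + mnorm (Dw x))) Ω := ((hci 1).add hmi).const_mul L
    have hm : AEStronglyMeasurable (fun x => F (Dw x)) (volume.restrict Ω) := hFc.comp_aestronglyMeasurable hD.1
    refine Integrable.mono' hg hm (ae_of_all _ fun x => ?_)
    rw [Real.norm_of_nonneg (hFpos _)]
    exact hF2 _
  have hTi : IntegrableOn (fun x => mdot (T₀ x) (Dw x)) Ω := by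
    have hdm : AEStronglyMeasurable (fun x => mdot (T₀ x) (Dw x)) (volume.restrict Ω) := by
      simp only [mdot]
      refine Finset.aestronglyMeasurable_fun_sum _ fun a _ => Finset.aestronglyMeasurable_fun_sum _ fun i _ => ?_
      have hp : Continuous (fun z : Fin N → Fin n → ℝ => z a i) := by fun_prop
      exact (hp.comp_aestronglyMeasurable hTmeas).mul (hp.comp_aestronglyMeasurable hD.1)
    refine Integrable.mono' (hmi.const_mul M) hdm ?_
    filter_upwards [hM] with x hx
    exact (mdot_cs _ _).trans (mul_le_mul_of_nonneg_right hx (mnorm_nn _))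
  have hli : IntegrableOn (fun x => δ * mnorm (Dw x)) Ω := hmi.const_mul δ
  have h2 : ∫ x in Ω, (δ * mnorm (Dw x) - C) ≤ ∫ x in Ω, (F (Dw x) - mdot (T₀ x) (Dw x)) := by
    refine integral_mono_ae (hli.sub (hci C)) (hFi.sub hTi) ?_
    filter_upwards [hpw] with x hx
    exact hx (Dw x)
  rw [integral_sub hli (hci C), integral_const_mul] at h2
  have h3 : ∫ x in Ω, C = C * (volume Ω).toReal := by
    simp [Measure.real, mul_comm]
  rw [h3] at h2
  exact h2

/-- **Lemma 4.1 (coerciveness of `𝓕`).** If `F` is convex of linear growth and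
`T₀ ∈ L^∞(Ω;ℝ^{N×n})` satisfies `ess inf_x min_{|ξ|=1} (F^∞(ξ) − T₀(x)·ξ) > 0`, then
`𝓕[w] ≥ δ∫_Ω|∇w| − C` for all zero-mean `w ∈ W^{1,1}(Ω;ℝ^N)`; in particular `𝓕`
diverges along zero-mean sequences with exploding `W^{1,1}` norm. -/
theorem general_coerciveness
    {n N : ℕ} (Ω : Set (EVec n))
    (hΩ : IsLipschitzDomain Ω) (hΩbdd : Bornology.IsBounded Ω)
    (ν L : ℝ) (hν : 0 < ν) (hνL : ν ≤ L)
    (F : (Fin N → Fin n → ℝ) → ℝ)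
    (hFpos : ∀ z, 0 ≤ F z)
    (hFconv : ConvexOn ℝ Set.univ F)
    (hFgrowth : ∀ z, ν * mnorm z - L ≤ F z ∧ F z ≤ L * (1 + mnorm z))
    (Finf : (Fin N → Fin n → ℝ) → ℝ)
    (hFinf : ∀ z, Filter.Tendsto (fun t : ℝ => t * F (t⁻¹ • z))
      (nhdsWithin 0 (Set.Ioi 0)) (nhds (Finf z)))
    (T₀ : EVec n → Fin N → Fin n → ℝ)
    (hTmeas : AEStronglyMeasurable T₀ (volume.restrict Ω))
    (hTbdd : ∃ M : ℝ, ∀ᵐ x ∂(volume.restrict Ω), mnorm (T₀ x) ≤ M)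
    -- `ess inf_{x∈Ω} min_{|ξ|=1} (F^∞(ξ) − T₀(x)·ξ) > 0`
    (hcoerc : ∃ δ₀ : ℝ, 0 < δ₀ ∧ ∀ᵐ x ∂(volume.restrict Ω),
      ∀ ξ : Fin N → Fin n → ℝ, mnorm ξ = 1 → δ₀ ≤ Finf ξ - mdot (T₀ x) ξ) :
    ∃ δ : ℝ, 0 < δ ∧ ∃ C : ℝ, 0 < C ∧
      (∀ (w : EVec n → Fin N → ℝ) (Dw : EVec n → Fin N → Fin n → ℝ),
        HasWeakDerivOn Ω w Dw → ZeroMean Ω w →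
          δ * (∫ x in Ω, mnorm (Dw x)) - C ≤ FFgen Ω F T₀ Dw) ∧
      (∀ (w : ℕ → EVec n → Fin N → ℝ) (Dw : ℕ → EVec n → Fin N → Fin n → ℝ),
        (∀ k, HasWeakDerivOn Ω (w k) (Dw k) ∧ ZeroMean Ω (w k)) →
        Filter.Tendsto
          (fun k => (∫ x in Ω, vnorm (w k x)) + ∫ x in Ω, mnorm (Dw k x))
          Filter.atTop Filter.atTop →
        Filter.Tendsto (fun k => FFgen Ω F T₀ (Dw k)) Filter.atTop Filter.atTop) := by
  obtain ⟨M₀, hM₀⟩ := hTbdd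
  obtain ⟨δ₀, hδ₀, hco⟩ := hcoerc
  have hL : 0 < L := hν.trans_le hνL
  have hF2 : ∀ z, F z ≤ L * (1 + mnorm z) := fun z => (hFgrowth z).2
  obtain ⟨δ, hδ, C, hC, hpw⟩ := pointwise hL hFpos hFconv hF2 hFinf (le_max_right M₀ 0) hδ₀
  have hvol : volume Ω < ∞ := hΩbdd.measure_lt_top
  have hFc : Continuous F := by
    have := hFconv.continuousOn_interior
    rw [interior_univ] at this
    exact continuousOn_univ.1 this
  have hpwa : ∀ᵐ x ∂(volume.restrict Ω), ∀ z, δ * mnorm z - C ≤ F z - mdot (T₀ x) z := by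
    filter_upwards [hM₀, hco] with x hx1 hx2
    exact hpw (T₀ x) (hx1.trans (le_max_left _ _)) hx2
  have h1 : ∀ (Dw : EVec n → Fin N → Fin n → ℝ), IntegrableOn Dw Ω →
      δ * (∫ x in Ω, mnorm (Dw x)) - (C * (volume Ω).toReal + 1) ≤ FFgen Ω F T₀ Dw := by
    intro Dw hD
    have h2 := energy_lower hvol hFpos hFc hF2 hTmeas hM₀ hpwa hD
    linarith
  refine ⟨δ, hδ, C * (volume Ω).toReal + 1, by positivity, fun w Dw hw _ => h1 Dw hw.2.1, ?_⟩
  intro w Dw hw htend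
  obtain ⟨P, hP, hpoin⟩ := poincare_vec (N := N) hΩ hΩbdd
  have h4 : Tendsto (fun k => ∫ x in Ω, mnorm (Dw k x)) atTop atTop := by
    refine Tendsto.atTop_of_const_mul₀ (show 0 < P + 1 by positivity) (tendsto_atTop_mono (fun k => ?_) htend)
    have := hpoin (w k) (Dw k) (hw k).1 (hw k).2
    linarith
  refine tendsto_atTop_mono (fun k => h1 (Dw k) (hw k).1.2.1) ?_
  exact tendsto_atTop_add_const_right _ _ (h4.const_mul_atTop hδ)
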